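/- arXiv:2203.16186 — 5 statements merged into one kernel-verified Lean document; each statement's English description precedes it below -/
import Mathlib

section
/- Let T be a tree on n ≥ 16 vertices with odd diameter, and let ξ_n(T) denote the smallest eigenvalue of the eccentricity matrix 𝓔(T). If n is odd then ξ_n(T) ≤ −√((16n−21+√(800n−1419))/2), and if n is even then ξ_n(T) ≤ −√((16n−21+5√(32n−67))/2); in each case equality holds if and only if T is isomorphic to T_{n,5}^{⌊(n−6)/2⌋, ⌈(n−6)/2⌉}. -/
open SimpleGraph Finset Matrix Polynomial

/-- The eccentricity of a vertex: the greatest distance from `u` to any vertex. -/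
noncomputable def ecc {V : Type*} [Fintype V] (G : SimpleGraph V) (u : V) : ℕ :=
  Finset.univ.sup fun v => G.dist u v

/-- The diameter of a graph: the greatest distance between any pair of vertices. -/
noncomputable def gdiam {V : Type*} [Fintype V] (G : SimpleGraph V) : ℕ :=
  Finset.univ.sup fun p : V × V => G.dist p.1 p.2

/-- The eccentricity matrix: `(u,v)` entry is `d(u,v)` if `d(u,v) = min (e u) (e v)`,
and `0` otherwise. -/
noncomputable def eccMatrix {V : Type*} [Fintype V] (G : SimpleGraph V) : Matrix V V ℝ :=
  Matrix.of fun u v =>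
    if G.dist u v = min (ecc G u) (ecc G v) then (G.dist u v : ℝ) else 0

/-- The least eigenvalue of a real matrix, as the infimum of the real roots of its
characteristic polynomial. -/
noncomputable def minEig {m : Type*} [Fintype m] [DecidableEq m] (M : Matrix m m ℝ) : ℝ :=
  sInf {x : ℝ | M.charpoly.IsRoot x}

/-- The tree `T_{n,d}^{a,b}`: the path `v₀v₁⋯v_d` together with `a` pendant vertices attached
to `v_{(d-1)/2}` and `b` pendant vertices attached to `v_{(d+1)/2}`. -/
def Tndab (d a b : ℕ) : SimpleGraph (Fin (d+1) ⊕ Fin a ⊕ Fin b) :=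
  SimpleGraph.fromRel (fun x y =>
    (∃ i : Fin d, x = Sum.inl i.castSucc ∧ y = Sum.inl i.succ) ∨
    (∃ j : Fin a, x = Sum.inl ⟨(d-1)/2, by omega⟩ ∧ y = Sum.inr (Sum.inl j)) ∨
    (∃ j : Fin b, x = Sum.inl ⟨(d+1)/2, by omega⟩ ∧ y = Sum.inr (Sum.inr j)))


section LinAlg
variable {m : Type*} [Fintype m] [DecidableEq m]

lemma root_iff (M : Matrix m m ℝ) (μ : ℝ) :
    M.charpoly.IsRoot μ ↔ ∃ v : m → ℝ, v ≠ 0 ∧ M *ᵥ v = μ • v := by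
  rw [← Matrix.charpoly_toLin', ← Module.End.hasEigenvalue_iff_isRoot_charpoly]
  constructor
  · intro h
    obtain ⟨v, hv⟩ := h.exists_hasEigenvector
    exact ⟨v, hv.2, by simpa using hv.apply_eq_smul⟩
  · rintro ⟨v, hv, h⟩
    exact Module.End.hasEigenvalue_of_hasEigenvector
      (Module.End.hasEigenvector_iff.2 ⟨Module.End.mem_eigenspace_iff.2 (by simpa using h), hv⟩)

lemma minEig_le_root (M : Matrix m m ℝ) (μ : ℝ) (h : M.charpoly.IsRoot μ) : minEig M ≤ μ := by
  refine csInf_le ?_ h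
  have hf : {x : ℝ | M.charpoly.IsRoot x}.Finite :=
    Polynomial.finite_setOfPred_isRoot (Matrix.charpoly_monic M).ne_zero
  exact hf.bddBelow

lemma minEig_quad (M : Matrix m m ℝ) (hM : M.IsSymm) (x : m → ℝ) :
    minEig M * (x ⬝ᵥ x) ≤ x ⬝ᵥ (M *ᵥ x) := by
  have hH : (M - minEig M • (1 : Matrix m m ℝ)).IsHermitian := by
    rw [Matrix.IsHermitian, Matrix.conjTranspose_eq_transpose_of_trivial]
    simp [Matrix.transpose_sub, hM.eq]
  have hP : (M - minEig M • (1 : Matrix m m ℝ)).PosSemidef := by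
    rw [hH.posSemidef_iff_eigenvalues_nonneg]
    intro i
    have h1 := hH.mulVec_eigenvectorBasis i
    have h2 : M.charpoly.IsRoot (hH.eigenvalues i + minEig M) := by
      rw [root_iff]
      refine ⟨⇑(hH.eigenvectorBasis i), ?_, ?_⟩
      · intro h0
        have := hH.eigenvectorBasis.orthonormal.ne_zero i
        apply this
        ext j
        exact congrFun h0 j
      · rw [Matrix.sub_mulVec, Matrix.smul_mulVec, Matrix.one_mulVec] at h1
        rw [add_smul, ← h1]; simp
    have := minEig_le_root M _ h2
    simp only [Pi.zero_apply]
    linarith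
  have := hP.dotProduct_mulVec_nonneg x
  rw [Matrix.sub_mulVec, Matrix.smul_mulVec, Matrix.one_mulVec] at this
  simp [dotProduct_sub] at this
  linarith

/-- lower bound via a positive super-solution -/
lemma minEig_ge [Nonempty m] (M : Matrix m m ℝ) (hM : M.IsSymm) (hnn : ∀ i j, 0 ≤ M i j) (z : m → ℝ)
    (hz : ∀ i, 0 < z i) (t : ℝ) (h : ∀ i, ∑ j, M i j * z j = t * z i) : -t ≤ minEig M := by
  have hq : ∀ y : m → ℝ, -(t * (y ⬝ᵥ y)) ≤ y ⬝ᵥ (M *ᵥ y) := by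
    intro y
    have e1 : y ⬝ᵥ (M *ᵥ y) = ∑ i, ∑ j, M i j * (y i * y j) := by
      simp only [dotProduct, mulVec, Finset.mul_sum]
      exact Finset.sum_congr rfl fun i _ => Finset.sum_congr rfl fun j _ => by ring
    have e2 : t * (y ⬝ᵥ y) = ∑ i, ∑ j, M i j * (y i ^ 2 * z j / z i) := by
      simp only [dotProduct, Finset.mul_sum]
      refine Finset.sum_congr rfl fun i _ => ?_
      have hi := (hz i).ne'
      have : ∑ j, M i j * (y i ^ 2 * z j / z i) = (∑ j, M i j * z j) * (y i ^2 / z i) := by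
        rw [Finset.sum_mul]; exact Finset.sum_congr rfl fun j _ => by ring
      rw [this, h i]; field_simp
    have e3 : t * (y ⬝ᵥ y) = ∑ i, ∑ j, M i j * (y j ^ 2 * z i / z j) := by
      rw [e2, Finset.sum_comm]
      refine Finset.sum_congr rfl fun i _ => Finset.sum_congr rfl fun j _ => ?_
      rw [hM.apply]
    have e4 : 0 ≤ ∑ i, ∑ j, M i j * (2 * (y i * y j) + y i ^ 2 * z j / z i + y j ^ 2 * z i / z j) := by
      refine Finset.sum_nonneg fun i _ => Finset.sum_nonneg fun j _ => mul_nonneg (hnn i j) ?_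
      have hi := hz i
      have hj := hz j
      have : 2 * (y i * y j) + y i ^ 2 * z j / z i + y j ^ 2 * z i / z j
        = (y i * z j + y j * z i)^2 / (z i * z j) := by field_simp; ring
      rw [this]; positivity
    have e5 : ∑ i, ∑ j, M i j * (2 * (y i * y j) + y i ^ 2 * z j / z i + y j ^ 2 * z i / z j)
        = 2 * (y ⬝ᵥ (M *ᵥ y)) + t * (y ⬝ᵥ y) + t * (y ⬝ᵥ y) := by
      nth_rewrite 1 [e2]
      rw [e3, e1]
      simp only [Finset.mul_sum, ← Finset.sum_add_distrib]
      exact Finset.sum_congr rfl fun i _ => Finset.sum_congr rfl fun j _ => by ring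
    linarith
  refine le_csInf ?_ ?_
  · have hH : M.IsHermitian := by
      rw [Matrix.IsHermitian, Matrix.conjTranspose_eq_transpose_of_trivial]; exact hM
    obtain ⟨i⟩ := ‹Nonempty m›
    refine ⟨hH.eigenvalues i, ?_⟩
    change M.charpoly.IsRoot _
    rw [root_iff]
    refine ⟨⇑(hH.eigenvectorBasis i), ?_, hH.mulVec_eigenvectorBasis i⟩
    intro h0
    have := hH.eigenvectorBasis.orthonormal.ne_zero i
    apply this
    ext j
    exact congrFun h0 j
  · intro μ hμ
    obtain ⟨v, hv, he⟩ := (root_iff M μ).1 hμ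
    have h1 := hq v
    rw [he, dotProduct_smul, smul_eq_mul] at h1
    have : 0 < v ⬝ᵥ v := by
      have h0 : 0 ≤ v ⬝ᵥ v := Finset.sum_nonneg fun i _ => mul_self_nonneg _
      exact lt_of_le_of_ne h0 fun h => hv (dotProduct_self_eq_zero.1 h.symm)
    nlinarith

/-- upper bound via a positive sub-solution, for a bipartite matrix -/
lemma minEig_le [Nonempty m] (M : Matrix m m ℝ) (hM : M.IsSymm)  (side : m → Bool)
    (hb : ∀ i j, side i = side j → M i j = 0) (z : m → ℝ)
    (hz : ∀ i, 0 < z i) (t : ℝ) (h : ∀ i, t * z i ≤ ∑ j, M i j * z j) :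
    minEig M ≤ -t ∧ ((∃ i, t * z i < ∑ j, M i j * z j) → minEig M < -t) := by
  set x : m → ℝ := fun i => if side i then z i else - z i with hx
  have h1 := minEig_quad M hM x
  have e0 : x ⬝ᵥ x = ∑ i, z i * z i := by
    refine Finset.sum_congr rfl fun i _ => ?_
    simp only [hx]; split_ifs <;> ring
  have e1 : x ⬝ᵥ (M *ᵥ x) = - ∑ i, z i * ∑ j, M i j * z j := by
    simp only [dotProduct, mulVec, Finset.mul_sum, ← Finset.sum_neg_distrib]
    refine Finset.sum_congr rfl fun i _ => Finset.sum_congr rfl fun j _ => ?_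
    have := hb i j
    simp only [hx]
    cases hi : side i <;> cases hj : side j <;> simp [hi, hj] at this ⊢ <;> simp [this]
  have hpos : 0 < ∑ i, z i * z i := by
    refine Finset.sum_pos (fun i _ => mul_pos (hz i) (hz i)) Finset.univ_nonempty
  have e2 : t * ∑ i, z i * z i = ∑ i, z i * (t * z i) := by
    rw [Finset.mul_sum]; exact Finset.sum_congr rfl fun i _ => by ring
  rw [e0, e1] at h1
  constructor
  · have : ∑ i, z i * (t * z i) ≤ ∑ i, z i * ∑ j, M i j * z j :=
      Finset.sum_le_sum fun i _ => mul_le_mul_of_nonneg_left (h i) (hz i).le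
    nlinarith
  · rintro ⟨i, hi⟩
    have : ∑ i, z i * (t * z i) < ∑ i, z i * ∑ j, M i j * z j :=
      Finset.sum_lt_sum (fun i _ => mul_le_mul_of_nonneg_left (h i) (hz i).le)
        ⟨i, Finset.mem_univ _, mul_lt_mul_of_pos_left hi (hz i)⟩
    nlinarith

end LinAlg


section Graph
variable {V : Type*} [Fintype V] [DecidableEq V]

lemma lip_dist {G : SimpleGraph V} (hG : G.Connected) (f : V → ℤ)
    (hf : ∀ u v, G.Adj u v → f v ≤ f u + 1) (u v : V) : f v ≤ f u + G.dist u v := by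
  obtain ⟨p, hp⟩ := hG.exists_walk_length_eq_dist u v
  rw [← hp]
  clear hp
  induction p with
  | nil => simp
  | cons h p ih =>
    have := hf _ _ h
    simp only [Walk.length_cons]
    push_cast
    linarith

/-- Splitting of a graph into two halves with prescribed depth functions. -/
structure Spl (G : SimpleGraph V) (side : V → Bool) (dep : V → ℕ) (r : ℕ) (x0 y0 : V) :
    Prop where
  opp : ∀ u v, side u ≠ side v → G.dist u v = dep u + dep v + 1
  same : ∀ u v, side u = side v → G.dist u v ≤ dep u + dep v
  le : ∀ u, dep u ≤ r
  sx : side x0 = true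
  sy : side y0 = false
  dx : dep x0 = r
  dy : dep y0 = r

lemma Spl.ecc_eq {G : SimpleGraph V} {side : V → Bool} {dep : V → ℕ} {r : ℕ} {x0 y0 : V}
    (S : Spl G side dep r x0 y0) (u : V) : ecc G u = dep u + r + 1 := by
  apply le_antisymm
  · refine Finset.sup_le fun v _ => ?_
    have := S.le v
    by_cases h : side u = side v
    · have := S.same u v h; omega
    · have := S.opp u v h; omega
  · cases hu : side u
    · have := S.opp u x0 (by simp [hu, S.sx])
      rw [S.dx] at this
      rw [← this]
      exact Finset.le_sup (f := fun v => G.dist u v) (Finset.mem_univ x0)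
    · have := S.opp u y0 (by simp [hu, S.sy])
      rw [S.dy] at this
      rw [← this]
      exact Finset.le_sup (f := fun v => G.dist u v) (Finset.mem_univ y0)

lemma Spl.mat {G : SimpleGraph V} {side : V → Bool} {dep : V → ℕ} {r : ℕ} {x0 y0 : V}
    (S : Spl G side dep r x0 y0) (u v : V) : eccMatrix G u v =
      if side u ≠ side v ∧ (dep u = r ∨ dep v = r) then (dep u : ℝ) + dep v + 1 else 0 := by
  have hu := S.le u
  have hv := S.le v
  simp only [eccMatrix, Matrix.of_apply, S.ecc_eq]
  by_cases h : side u = side v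
  · have := S.same u v h
    rw [if_neg (by omega), if_neg (by simp [h])]
  · have := S.opp u v h
    by_cases h2 : dep u = r ∨ dep v = r
    · rw [if_pos (by omega), if_pos ⟨h, h2⟩, this]; push_cast; ring
    · rw [if_neg (by omega), if_neg (by simp [h2])]

lemma eccMatrix_symm (G : SimpleGraph V) : (eccMatrix G).IsSymm := by
  ext u v
  simp only [eccMatrix, Matrix.transpose_apply, Matrix.of_apply]
  rw [G.dist_comm, min_comm]

lemma eccMatrix_nonneg (G : SimpleGraph V) (u v : V) : 0 ≤ eccMatrix G u v := by
  simp only [eccMatrix, Matrix.of_apply]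
  split_ifs <;> positivity

/-- Splitting with centres. -/
structure CSpl (G : SimpleGraph V) (side : V → Bool) (dep : V → ℕ) (r : ℕ) (x0 y0 c1 c2 : V) :
    Prop extends Spl G side dep r x0 y0 where
  s1 : side c1 = true
  s2 : side c2 = false
  d1 : ∀ u, side u = true → dep u = G.dist u c1
  d2 : ∀ u, side u = false → dep u = G.dist u c2
  conn : G.Connected

lemma CSpl.swap {G : SimpleGraph V} {side : V → Bool} {dep : V → ℕ} {r : ℕ} {x0 y0 c1 c2 : V}
    (S : CSpl G side dep r x0 y0 c1 c2) :
    CSpl G (fun u => !side u) dep r y0 x0 c2 c1 where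
  opp u v h := S.opp u v (by simpa using h)
  same u v h := S.same u v (by simpa using h)
  le := S.le
  sx := by simp [S.sy]
  sy := by simp [S.sx]
  dx := S.dy
  dy := S.dx
  s1 := by simp [S.s2]
  s2 := by simp [S.s1]
  d1 u h := S.d2 u (by simpa using h)
  d2 u h := S.d1 u (by simpa using h)
  conn := S.conn

lemma exists_cspl (T : SimpleGraph V) (hT : T.IsTree) (r : ℕ) (hd : gdiam T = 2 * r + 1) :
    ∃ side dep x0 y0 c1 c2, CSpl T side dep r x0 y0 c1 c2 := by
  classical
  have hc := hT.connected
  have := hc.nonempty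
  obtain ⟨⟨x0, y0⟩, -, hxy⟩ := Finset.exists_mem_eq_sup (Finset.univ : Finset (V × V))
    Finset.univ_nonempty (fun p : V × V => T.dist p.1 p.2)
  change gdiam T = T.dist x0 y0 at hxy
  have hmax : ∀ u v, T.dist u v ≤ 2 * r + 1 := fun u v => by
    rw [← hd]
    exact Finset.le_sup (f := fun p : V × V => T.dist p.1 p.2) (Finset.mem_univ (u, v))
  rw [hd] at hxy
  obtain ⟨p, hp⟩ := hc.exists_walk_length_eq_dist x0 y0
  rw [← hxy] at hp
  set c1 := p.getVert r with hc1
  set c2 := p.getVert (r + 1) with hc2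
  have hadj : T.Adj c1 c2 := p.adj_getVert_succ (by omega)
  have l1 : T.dist x0 c1 ≤ r := by
    refine (SimpleGraph.dist_le (p.take r)).trans ?_
    simp
  have l2 : T.dist c2 y0 ≤ r := by
    refine (SimpleGraph.dist_le (p.drop (r+1))).trans ?_
    simp; omega
  have l3 : T.dist c1 c2 = 1 := SimpleGraph.dist_eq_one_iff_adj.2 hadj
  have t1 : T.dist x0 y0 ≤ T.dist x0 c1 + T.dist c1 y0 := hc.dist_triangle
  have t2 : T.dist x0 y0 ≤ T.dist x0 c2 + T.dist c2 y0 := hc.dist_triangle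
  have t3 : T.dist c1 y0 ≤ T.dist c1 c2 + T.dist c2 y0 := hc.dist_triangle
  have t4 : T.dist x0 c2 ≤ T.dist x0 c1 + T.dist c1 c2 := hc.dist_triangle
  set H := T.deleteEdges {s(c1, c2)} with hH
  have hbr : ¬ H.Reachable c1 c2 := by
    have := (isAcyclic_iff_forall_adj_isBridge.1 hT.isAcyclic) hadj
    rw [isBridge_iff] at this
    exact this
  set side : V → Bool := fun u => decide (H.Reachable c1 u) with hs
  set dep : V → ℕ := fun u => if side u then T.dist u c1 else T.dist u c2 with hdep
  have s1 : side c1 = true := by simp [hs]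
  have s2 : side c2 = false := by simp [hs, hbr]
  have cross : ∀ u v, T.Adj u v → side u = true → side v = false → u = c1 ∧ v = c2 := by
    intro u v huv hu hv
    simp only [hs, decide_eq_true_eq, decide_eq_false_iff_not] at hu hv
    by_contra hne
    by_cases hne2 : u = c2 ∧ v = c1
    · rw [hne2.1] at hu; exact hbr hu
    · apply hv
      refine hu.trans (SimpleGraph.Adj.reachable ?_)
      rw [hH, SimpleGraph.deleteEdges_adj]
      refine ⟨huv, ?_⟩
      simp only [Set.mem_singleton_iff, Sym2.eq_iff]
      tauto
  have d1 : ∀ u, side u = true → dep u = T.dist u c1 := fun u h => by simp [hdep, h]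
  have d2 : ∀ u, side u = false → dep u = T.dist u c2 := fun u h => by simp [hdep, h]
  set f : V → ℤ := fun u => if side u then -(dep u : ℤ) else dep u + 1 with hf
  have hlip : ∀ u v, T.Adj u v → f v ≤ f u + 1 := by
    intro u v huv
    have a1 : T.dist u c1 ≤ T.dist u v + T.dist v c1 := hc.dist_triangle
    have a2 : T.dist u c2 ≤ T.dist u v + T.dist v c2 := hc.dist_triangle
    have a3 : T.dist v c1 ≤ T.dist v u + T.dist u c1 := hc.dist_triangle
    have a4 : T.dist v c2 ≤ T.dist v u + T.dist u c2 := hc.dist_triangle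
    have a5 := SimpleGraph.dist_eq_one_iff_adj.2 huv
    have a6 := SimpleGraph.dist_eq_one_iff_adj.2 huv.symm
    cases hu : side u <;> cases hv : side v
    · simp only [hf, hu, hv, d2 u hu, d2 v hv]; simp; omega
    · simp only [hf, hu, hv]; simp; omega
    · obtain ⟨rfl, rfl⟩ := cross u v huv hu hv
      simp only [hf, hu, hv, d1 _ hu, d2 _ hv]; simp
    · simp only [hf, hu, hv, d1 u hu, d1 v hv]; simp; omega
  have oppA : ∀ u v, side u = true → side v = false → T.dist u v = dep u + dep v + 1 := by
    intro u v hu hv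
    have b1 := lip_dist hc f hlip u v
    simp only [hf, hu, hv] at b1
    have b2 : T.dist u v ≤ T.dist u c1 + T.dist c1 v := hc.dist_triangle
    have b3 : T.dist c1 v ≤ T.dist c1 c2 + T.dist c2 v := hc.dist_triangle
    rw [← d1 u hu] at b2
    rw [T.dist_comm (u := c2), ← d2 v hv] at b3
    simp at b1
    omega
  have opp : ∀ u v, side u ≠ side v → T.dist u v = dep u + dep v + 1 := by
    intro u v h
    cases hu : side u <;> cases hv : side v
    · simp [hu, hv] at h
    · rw [T.dist_comm, oppA v u hv hu]; omega
    · exact oppA u v hu hv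
    · simp [hu, hv] at h
  have c10 : dep c1 = 0 := by rw [d1 _ s1]; simp
  have c20 : dep c2 = 0 := by rw [d2 _ s2]; simp
  have sx : side x0 = true := by
    by_contra h
    rw [Bool.not_eq_true] at h
    have h1 := oppA c1 x0 s1 h
    rw [T.dist_comm, c10, d2 x0 h] at h1
    omega
  have sy : side y0 = false := by
    by_contra h
    rw [Bool.not_eq_false] at h
    have h1 := oppA y0 c2 h s2
    rw [T.dist_comm, c20, d1 y0 h, T.dist_comm (u := y0)] at h1
    omega
  have dx : dep x0 = r := by rw [d1 _ sx]; omega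
  have dy : dep y0 = r := by rw [d2 _ sy, T.dist_comm]; omega
  refine ⟨side, dep, x0, y0, c1, c2, ⟨⟨opp, ?_, ?_, sx, sy, dx, dy⟩, s1, s2, d1, d2, hc⟩⟩
  · intro u v h
    cases hu : side u
    · rw [d2 u hu, d2 v (h ▸ hu), T.dist_comm (u := v)]; exact hc.dist_triangle
    · rw [d1 u hu, d1 v (h ▸ hu), T.dist_comm (u := v)]; exact hc.dist_triangle
  · intro u
    cases hu : side u
    · have := opp u x0 (by simp [hu, sx])
      have := hmax u x0
      omega
    · have := opp u y0 (by simp [hu, sy])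
      have := hmax u y0
      omega

end Graph


section Bounds
variable {V : Type*} [Fintype V] [DecidableEq V]

lemma calcsum (side : V → Bool) (s : Bool) (x c : V) (hx : side x = s) (hc : side c = s)
    (hxc : x ≠ c) (a b d : ℝ) :
    ∑ v, (if side v = s then (if v = x then a else if v = c then b else d) else 0) =
      a + b + d * ((Finset.univ.filter fun v => side v = s).card - 2) := by
  have h : ∀ v, (if side v = s then (if v = x then a else if v = c then b else d) else 0) =
      d * (if side v = s then 1 else 0) + (if v = x then (a - d) else 0)
        + (if v = c then (b - d) else 0) := by
    intro v
    by_cases h1 : v = x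
    · subst h1; simp [hx, hxc]
    · by_cases h2 : v = c
      · subst h2; simp [hc, h1]
      · simp [h1, h2]
  rw [Finset.sum_congr rfl fun v _ => h v]
  rw [Finset.sum_add_distrib, Finset.sum_add_distrib, ← Finset.mul_sum, Finset.sum_ite_eq',
    Finset.sum_ite_eq', Finset.sum_boole]
  simp
  ring

variable {G : SimpleGraph V} {side : V → Bool} {dep : V → ℕ} {r : ℕ} {x0 y0 c1 c2 : V}

lemma CSpl.dc1 (S : CSpl G side dep r x0 y0 c1 c2) : dep c1 = 0 := by
  rw [S.d1 _ S.s1]; simp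

lemma CSpl.dc2 (S : CSpl G side dep r x0 y0 c1 c2) : dep c2 = 0 := by
  rw [S.d2 _ S.s2]; simp

lemma CSpl.pos (S : CSpl G side dep r x0 y0 c1 c2) (v : V) (h1 : v ≠ c1) (h2 : v ≠ c2) :
    1 ≤ dep v := by
  by_contra h
  have h0 : dep v = 0 := by omega
  cases hv : side v
  · rw [S.d2 v hv, S.conn.dist_eq_zero_iff] at h0; exact h2 h0
  · rw [S.d1 v hv, S.conn.dist_eq_zero_iff] at h0; exact h1 h0

lemma CSpl.bound2 (S : CSpl G side dep r x0 y0 c1 c2) (hr : 2 ≤ r) (t P Q : ℝ) (ht : 0 < t)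
    (hP : P = 16 * ((Finset.univ.filter fun v => side v = true).card : ℝ) - 23)
    (hQ : Q = 16 * ((Finset.univ.filter fun v => side v = false).card : ℝ) - 23)
    (hPx : P < t ^ 2) (hf : (t ^ 2 - P) * (t ^ 2 - Q) ≤ 25 * t ^ 2) :
    (((t ^ 2 - P) * (t ^ 2 - Q) < 25 * t ^ 2) ∨ r ≠ 2 ∨ ∃ u, u ≠ x0 ∧ u ≠ y0 ∧ dep u = r) →
      minEig (eccMatrix G) < -t := by
  intro hstrict
  have hne : Nonempty V := ⟨x0⟩
  have x1 : x0 ≠ c1 := fun h => by have := S.dx; rw [h, S.dc1] at this; omega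
  have y2 : y0 ≠ c2 := fun h => by have := S.dy; rw [h, S.dc2] at this; omega
  have x2 : x0 ≠ c2 := fun h => by have := S.sx; rw [h, S.s2] at this; simp at this
  have y1 : y0 ≠ c1 := fun h => by have := S.sy; rw [h, S.s1] at this; simp at this
  have xy : x0 ≠ y0 := fun h => by have := S.sy; rw [← h, S.sx] at this; simp at this
  set α : ℝ := t ^ 2 - P with hα
  have hα0 : 0 < α := by rw [hα]; linarith
  set δ : ℝ := α / t with hδ
  have hδ0 : 0 < δ := by positivity
  have htδ : t * δ = α := by rw [hδ]; field_simp
  set wt : V → ℝ := fun v => if v = c1 ∨ v = c2 then 3 else 4 with hwt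
  have wpos : ∀ v, 0 < wt v := fun v => by simp only [hwt]; split_ifs <;> norm_num
  set z : V → ℝ := fun v => if v = x0 then α else if v = y0 then 5 * t else
    if side v = true then 5 * wt v else δ * wt v with hz
  have zpos : ∀ v, 0 < z v := fun v => by
    have := wpos v
    simp only [hz]; split_ifs <;> positivity
  have hw : ∀ v, wt v ≤ (dep v : ℝ) + r + 1 := by
    intro v
    have hr' : (2 : ℝ) ≤ r := by exact_mod_cast hr
    by_cases h : v = c1 ∨ v = c2
    · simp only [hwt, if_pos h]
      have : (0 : ℝ) ≤ dep v := by positivity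
      linarith
    · simp only [hwt, if_neg h]
      push Not at h
      have : (1 : ℝ) ≤ dep v := by exact_mod_cast S.pos v h.1 h.2
      linarith
  have mnn := eccMatrix_nonneg G
  have my : ∀ u, side u = true → eccMatrix G u y0 = (dep u : ℝ) + r + 1 := fun u hu => by
    rw [S.mat, if_pos ⟨by simp [hu, S.sy], Or.inr S.dy⟩, S.dy]
  have mx : ∀ u, side u = false → eccMatrix G u x0 = (dep u : ℝ) + r + 1 := fun u hu => by
    rw [S.mat, if_pos ⟨by simp [hu, S.sx], Or.inr S.dx⟩, S.dx]
  have zx : z x0 = α := by simp [hz]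
  have zy : z y0 = 5 * t := by simp [hz, xy.symm]
  -- generic rows
  have rowg : ∀ u, u ≠ x0 → u ≠ y0 → t * z u * ((dep u : ℝ) + r + 1) ≤
      wt u * ∑ j, eccMatrix G u j * z j := by
    intro u hux huy
    cases hu : side u
    · have h1 : eccMatrix G u x0 * z x0 ≤ ∑ j, eccMatrix G u j * z j :=
        Finset.single_le_sum (f := fun j => eccMatrix G u j * z j)
          (fun j _ => mul_nonneg (mnn u j) (zpos j).le) (Finset.mem_univ x0)
      rw [mx u hu, zx] at h1
      have h2 : z u = δ * wt u := by simp [hz, hux, huy, hu]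
      rw [h2, ← mul_assoc, htδ]
      have := mul_le_mul_of_nonneg_left h1 (wpos u).le
      linarith
    · have h1 : eccMatrix G u y0 * z y0 ≤ ∑ j, eccMatrix G u j * z j :=
        Finset.single_le_sum (f := fun j => eccMatrix G u j * z j)
          (fun j _ => mul_nonneg (mnn u j) (zpos j).le) (Finset.mem_univ y0)
      rw [my u hu, zy] at h1
      have h2 : z u = 5 * wt u := by simp [hz, hux, huy, hu]
      rw [h2]
      have := mul_le_mul_of_nonneg_left h1 (wpos u).le
      linarith
  have hr' : (2 : ℝ) ≤ r := by exact_mod_cast hr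
  -- row x0
  have rowx : 5 * (5 * t) + δ * Q ≤ ∑ j, eccMatrix G x0 j * z j := by
    have := calcsum side false y0 c2 S.sy S.s2 y2 (5 * (5 * t)) (9 * δ) (16 * δ)
    have e : 5 * (5 * t) + δ * Q = 5 * (5 * t) + 9 * δ + 16 * δ *
      (((Finset.univ.filter fun v => side v = false).card : ℝ) - 2) := by rw [hQ]; ring
    rw [e, ← this]
    refine Finset.sum_le_sum fun v _ => ?_
    rw [(eccMatrix_symm G).apply v x0]
    split_ifs with h1 h2 h3
    · rw [h2, mx y0 S.sy, zy, S.dy]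
      exact mul_le_mul_of_nonneg_right (by linarith) (by positivity)
    · rw [h3, mx c2 S.s2, S.dc2]
      have : z c2 = δ * 3 := by simp [hz, x2.symm, y2.symm, S.s2, hwt]
      rw [this]
      push_cast
      nlinarith
    · rw [mx v h1]
      have h4 : v ≠ c1 := fun h => by rw [h, S.s1] at h1; simp at h1
      have h5 : v ≠ x0 := fun h => by rw [h, S.sx] at h1; simp at h1
      have h6 : z v = δ * 4 := by simp [hz, h5, h2, h1, hwt, h4, h3]
      have := hw v
      simp only [hwt, h3, h4] at this
      simp at this
      rw [h6]
      nlinarith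
    · exact mul_nonneg (mnn _ _) (zpos _).le
  have rowy : 5 * α + 5 * P ≤ ∑ j, eccMatrix G y0 j * z j := by
    have := calcsum side true x0 c1 S.sx S.s1 x1 (5 * α) (9 * 5) (16 * 5)
    have e : 5 * α + 5 * P = 5 * α + 9 * 5 + 16 * 5 *
      (((Finset.univ.filter fun v => side v = true).card : ℝ) - 2) := by rw [hP]; ring
    rw [e, ← this]
    refine Finset.sum_le_sum fun v _ => ?_
    rw [(eccMatrix_symm G).apply v y0]
    split_ifs with h1 h2 h3
    · rw [h2, my x0 S.sx, zx, S.dx]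
      exact mul_le_mul_of_nonneg_right (by linarith) (by positivity)
    · rw [h3, my c1 S.s1, S.dc1]
      have : z c1 = 5 * 3 := by simp [hz, x1.symm, y1.symm, S.s1, hwt]
      rw [this]
      push_cast
      nlinarith
    · rw [my v h1]
      have h4 : v ≠ c2 := fun h => by rw [h, S.s2] at h1; simp at h1
      have h5 : v ≠ y0 := fun h => by rw [h, S.sy] at h1; simp at h1
      have h6 : z v = 5 * 4 := by simp [hz, h5, h2, h1, hwt, h4, h3]
      have := hw v
      simp only [hwt, h3, h4] at this
      simp at this
      rw [h6]
      nlinarith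
    · exact mul_nonneg (mnn _ _) (zpos _).le
  have key : t * (5 * (5 * t) + δ * Q - t * α) = 25 * t ^ 2 - α * (t ^ 2 - Q) := by
    have : t * (δ * Q) = α * Q := by rw [← mul_assoc, htδ]
    linear_combination this
  refine (minEig_le (eccMatrix G) (eccMatrix_symm G) side ?_ z zpos t ?_).2 ?_
  · intro i j hij
    rw [S.mat, if_neg (by simp [hij])]
  · intro u
    by_cases hux : u = x0
    · rw [hux, zx]
      have : 0 ≤ t * (5 * (5 * t) + δ * Q - t * α) := by rw [key]; linarith
      have := nonneg_of_mul_nonneg_right this ht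
      linarith
    by_cases huy : u = y0
    · rw [huy, zy]
      have : 5 * α + 5 * P = t * (5 * t) := by rw [hα]; ring
      linarith
    have h1 := rowg u hux huy
    have h2 : t * z u * wt u ≤ t * z u * ((dep u : ℝ) + r + 1) :=
      mul_le_mul_of_nonneg_left (hw u) (mul_pos ht (zpos u)).le
    have h3 := wpos u
    by_contra hcon
    push Not at hcon
    nlinarith
  · have gen : ∀ u, u ≠ x0 → u ≠ y0 → wt u < (dep u : ℝ) + r + 1 →
        t * z u < ∑ j, eccMatrix G u j * z j := by
      intro u hux huy hlt
      have h1 := rowg u hux huy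
      have h2 : t * z u * wt u < t * z u * ((dep u : ℝ) + r + 1) :=
        mul_lt_mul_of_pos_left hlt (mul_pos ht (zpos u))
      have h3 := wpos u
      by_contra hcon
      push Not at hcon
      nlinarith
    rcases hstrict with h | h | ⟨u, hux, huy, hdu⟩
    · refine ⟨x0, ?_⟩
      rw [zx]
      have : 0 < t * (5 * (5 * t) + δ * Q - t * α) := by rw [key]; linarith
      have := pos_of_mul_pos_right this ht.le
      linarith
    · refine ⟨c1, gen c1 x1.symm y1.symm ?_⟩
      have h3 : (3 : ℝ) ≤ r := by
        have : 3 ≤ r := by omega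
        exact_mod_cast this
      rw [S.dc1]
      simp [hwt]
      linarith
    · refine ⟨u, gen u hux huy ?_⟩
      have h1 : u ≠ c1 := fun h => by rw [h, S.dc1] at hdu; omega
      have h2 : u ≠ c2 := fun h => by rw [h, S.dc2] at hdu; omega
      rw [hdu]
      simp [hwt, h1, h2]
      linarith

lemma calcsum1 (side : V → Bool) (s : Bool) (c : V) (hc : side c = s) (b d : ℝ) :
    ∑ v, (if side v = s then (if v = c then b else d) else 0) =
      b + d * ((Finset.univ.filter fun v => side v = s).card - 1) := by
  have h : ∀ v, (if side v = s then (if v = c then b else d) else 0) =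
      d * (if side v = s then 1 else 0) + (if v = c then (b - d) else 0) := by
    intro v
    by_cases h2 : v = c
    · subst h2; simp [hc]
    · simp [h2]
  rw [Finset.sum_congr rfl fun v _ => h v]
  rw [Finset.sum_add_distrib, ← Finset.mul_sum, Finset.sum_ite_eq', Finset.sum_boole]
  simp
  ring

lemma CSpl.bound1 (S : CSpl G side dep 1 x0 y0 c1 c2) (t A B : ℝ) (ht : 0 < t)
    (hA : A = ((Finset.univ.filter fun v => side v = true).card : ℝ) - 1)
    (hB : B = ((Finset.univ.filter fun v => side v = false).card : ℝ) - 1)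
    (hA0 : 0 < A) (hB0 : 0 < B)
    (hBx : 4 * B < t ^ 2) (hf : (t ^ 2 - 4 * A) * (t ^ 2 - 4 * B) < 9 * t ^ 2 * A * B) :
    minEig (eccMatrix G) < -t := by
  have hne : Nonempty V := ⟨x0⟩
  have x1 : x0 ≠ c1 := fun h => by have := S.dx; rw [h, S.dc1] at this; omega
  have y2 : y0 ≠ c2 := fun h => by have := S.dy; rw [h, S.dc2] at this; omega
  have x2 : x0 ≠ c2 := fun h => by have := S.sx; rw [h, S.s2] at this; simp at this
  have y1 : y0 ≠ c1 := fun h => by have := S.sy; rw [h, S.s1] at this; simp at this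
  have c12 : c1 ≠ c2 := fun h => by have := S.s2; rw [← h, S.s1] at this; simp at this
  set α : ℝ := t ^ 2 - 4 * B with hα
  have hα0 : 0 < α := by rw [hα]; linarith
  set γ : ℝ := 3 * t * A with hγ
  have hγ0 : 0 < γ := by positivity
  set β : ℝ := 6 * A * B with hβ
  have hβ0 : 0 < β := by positivity
  set δ : ℝ := 2 * α * A / t with hδ
  have hδ0 : 0 < δ := by positivity
  have htδ : t * δ = 2 * α * A := by rw [hδ]; field_simp
  set z : V → ℝ := fun v => if v = c1 then β else if v = c2 then δ else
    if side v = true then α else γ with hz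
  have zpos : ∀ v, 0 < z v := fun v => by
    simp only [hz]; split_ifs <;> positivity
  have zc1 : z c1 = β := by simp [hz]
  have zc2 : z c2 = δ := by simp [hz, c12.symm]
  have d1 : ∀ v, v ≠ c1 → v ≠ c2 → dep v = 1 := fun v h1 h2 => by
    have := S.pos v h1 h2
    have := S.le v
    omega
  have zt : ∀ v, side v = true → v ≠ c1 → v ≠ c2 ∧ z v = α := fun v hv h1 => by
    have h4 : v ≠ c2 := fun h => by rw [h, S.s2] at hv; simp at hv
    exact ⟨h4, by simp [hz, h1, h4, hv]⟩
  have zf : ∀ v, side v = false → v ≠ c2 → v ≠ c1 ∧ z v = γ := fun v hv h1 => by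
    have h4 : v ≠ c1 := fun h => by rw [h, S.s1] at hv; simp at hv
    exact ⟨h4, by simp [hz, h1, h4, hv]⟩
  have rowt : ∀ u, side u = true → ∑ j, eccMatrix G u j * z j =
      if u = c1 then 2 * γ * B else 2 * δ + 3 * γ * B := by
    intro u hu
    have e : ∀ v, eccMatrix G u v * z v = if side v = false then
        (if v = c2 then (if u = c1 then 0 else 2 * δ) else (if u = c1 then 2 * γ else 3 * γ))
        else 0 := by
      intro v
      rw [S.mat]
      cases hv : side v
      · by_cases hv2 : v = c2
        · subst hv2
          by_cases hu1 : u = c1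
          · subst hu1; simp [S.dc1, S.dc2]
          · have := (zt u hu hu1).1
            simp [hu1, hu, S.dc2, d1 u hu1 this, zc2]; left; norm_num
        · obtain ⟨h4, h5⟩ := zf v hv hv2
          by_cases hu1 : u = c1
          · subst hu1; simp [S.dc1, d1 v h4 hv2, hu, hv2, h5]; left; norm_num
          · have := (zt u hu hu1).1
            simp [hu1, hu, d1 v h4 hv2, hv2, d1 u hu1 this, h5]; left; norm_num
      · simp [hu]
    rw [Finset.sum_congr rfl fun v _ => e v, calcsum1 side false c2 S.s2, ← hB]
    split_ifs <;> ring
  have rowf : ∀ u, side u = false → ∑ j, eccMatrix G u j * z j =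
      if u = c2 then 2 * α * A else 2 * β + 3 * α * A := by
    intro u hu
    have e : ∀ v, eccMatrix G u v * z v = if side v = true then
        (if v = c1 then (if u = c2 then 0 else 2 * β) else (if u = c2 then 2 * α else 3 * α))
        else 0 := by
      intro v
      rw [S.mat]
      cases hv : side v
      · simp [hu]
      · by_cases hv2 : v = c1
        · subst hv2
          by_cases hu1 : u = c2
          · subst hu1; simp [S.dc1, S.dc2]
          · have := (zf u hu hu1).1
            simp [hu1, hu, S.dc1, d1 u this hu1, zc1]; left; norm_num
        · obtain ⟨h4, h5⟩ := zt v hv hv2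
          by_cases hu1 : u = c2
          · subst hu1; simp [S.dc2, d1 v hv2 h4, hu, hv2, h5]; left; norm_num
          · have := (zf u hu hu1).1
            simp [hu1, hu, d1 v hv2 h4, hv2, d1 u this hu1, h5]; left; norm_num
    rw [Finset.sum_congr rfl fun v _ => e v, calcsum1 side true c1 S.s1, ← hA]
    split_ifs <;> ring
  have key : 0 < t * (2 * δ + 3 * γ * B - t * α) := by
    have : t * (2 * δ + 3 * γ * B - t * α) = 9 * t ^ 2 * A * B - (t ^ 2 - 4 * A) * α := by
      rw [hγ]
      linear_combination 2 * htδ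
    rw [this]; linarith
  have key2 := pos_of_mul_pos_right key ht.le
  refine (minEig_le (eccMatrix G) (eccMatrix_symm G) side ?_ z zpos t ?_).2 ?_
  · intro i j hij
    rw [S.mat, if_neg (by simp [hij])]
  · intro u
    cases hu : side u
    · rw [rowf u hu]
      by_cases h : u = c2
      · rw [if_pos h, h, zc2, htδ]
      · rw [if_neg h, (zf u hu h).2, hβ, hγ, hα]
        apply le_of_eq; ring
    · rw [rowt u hu]
      by_cases h : u = c1
      · rw [if_pos h, h, zc1, hβ, hγ]
        apply le_of_eq; ring
      · rw [if_neg h, (zt u hu h).2]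
        linarith
  · refine ⟨x0, ?_⟩
    rw [rowt x0 S.sx, if_neg x1, (zt x0 S.sx x1).2]
    linarith

end Bounds


section Extremal

lemma Tadj_path (a b : ℕ) (i : Fin 5) :
    (Tndab 5 a b).Adj (Sum.inl i.castSucc) (Sum.inl i.succ) := by
  rw [Tndab, SimpleGraph.fromRel_adj]
  refine ⟨?_, Or.inl (Or.inl ⟨i, rfl, rfl⟩)⟩
  intro h
  have := Sum.inl.inj h
  exact absurd this (by fin_cases i <;> decide)

lemma Tadj_a (a b : ℕ) (j : Fin a) :
    (Tndab 5 a b).Adj (Sum.inl 2) (Sum.inr (Sum.inl j)) := by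
  rw [Tndab, SimpleGraph.fromRel_adj]
  exact ⟨by simp, Or.inl (Or.inr (Or.inl ⟨j, rfl, rfl⟩))⟩

lemma Tadj_b (a b : ℕ) (j : Fin b) :
    (Tndab 5 a b).Adj (Sum.inl 3) (Sum.inr (Sum.inr j)) := by
  rw [Tndab, SimpleGraph.fromRel_adj]
  exact ⟨by simp, Or.inl (Or.inr (Or.inr ⟨j, rfl, rfl⟩))⟩

lemma Tadj_ind (a b : ℕ) (p : Fin 6 ⊕ Fin a ⊕ Fin b → Fin 6 ⊕ Fin a ⊕ Fin b → Prop)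
    (hs : ∀ x y, p x y → p y x) (h1 : ∀ i : Fin 5, p (Sum.inl i.castSucc) (Sum.inl i.succ))
    (h2 : ∀ j, p (Sum.inl 2) (Sum.inr (Sum.inl j)))
    (h3 : ∀ j, p (Sum.inl 3) (Sum.inr (Sum.inr j))) :
    ∀ x y, (Tndab 5 a b).Adj x y → p x y := by
  intro x y h
  rw [Tndab, SimpleGraph.fromRel_adj] at h
  rcases h.2 with (⟨i, rfl, rfl⟩ | ⟨j, rfl, rfl⟩ | ⟨j, rfl, rfl⟩) |
    (⟨i, rfl, rfl⟩ | ⟨j, rfl, rfl⟩ | ⟨j, rfl, rfl⟩)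
  · exact h1 i
  · exact h2 j
  · exact h3 j
  · exact hs _ _ (h1 i)
  · exact hs _ _ (h2 j)
  · exact hs _ _ (h3 j)

/-- The half of the extremal tree. -/
def Tside (a b : ℕ) : Fin 6 ⊕ Fin a ⊕ Fin b → Bool :=
  Sum.elim ![true, true, true, false, false, false] (Sum.elim (fun _ => true) (fun _ => false))

/-- The depth in the extremal tree. -/
def Tdep (a b : ℕ) : Fin 6 ⊕ Fin a ⊕ Fin b → ℕ :=
  Sum.elim ![2, 1, 0, 0, 1, 2] (fun _ => 1)

lemma Tconn_aux (a b : ℕ) (x : Fin 6 ⊕ Fin a ⊕ Fin b) : (∃ p : (Tndab 5 a b).Walk x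
    (if Tside a b x then Sum.inl 2 else Sum.inl 3), p.length ≤ Tdep a b x) := by
  have p0 := Tadj_path a b 0
  have p1 := Tadj_path a b 1
  have p3 := Tadj_path a b 3
  have p4 := Tadj_path a b 4
  rcases x with i | j | j
  · fin_cases i
    · exact ⟨Walk.cons p0 (Walk.cons p1 Walk.nil), Nat.le_refl 2⟩
    · exact ⟨Walk.cons p1 Walk.nil, Nat.le_refl 1⟩
    · exact ⟨Walk.nil, Nat.le_refl 0⟩
    · exact ⟨Walk.nil, Nat.le_refl 0⟩
    · exact ⟨Walk.cons p3.symm Walk.nil, Nat.le_refl 1⟩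
    · exact ⟨Walk.cons p4.symm (Walk.cons p3.symm Walk.nil), Nat.le_refl 2⟩
  · exact ⟨Walk.cons (Tadj_a a b j).symm Walk.nil, Nat.le_refl 1⟩
  · exact ⟨Walk.cons (Tadj_b a b j).symm Walk.nil, Nat.le_refl 1⟩

lemma Tconn (a b : ℕ) : (Tndab 5 a b).Connected := by
  have h : ∀ x, (Tndab 5 a b).Reachable x (Sum.inl 2) := by
    intro x
    obtain ⟨p, -⟩ := Tconn_aux a b x
    by_cases hx : Tside a b x = true
    · rw [if_pos hx] at p; exact ⟨p⟩
    · rw [if_neg hx] at p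
      exact Reachable.trans ⟨p⟩ (Tadj_path a b 2).symm.reachable
  have : Nonempty (Fin 6 ⊕ Fin a ⊕ Fin b) := ⟨Sum.inl 0⟩
  exact ⟨fun x y => (h x).trans (h y).symm⟩

lemma Tspl (a b : ℕ) : Spl (Tndab 5 a b) (Tside a b) (Tdep a b) 2 (Sum.inl 0) (Sum.inl 5) := by
  have hc := Tconn a b
  set f : Fin 6 ⊕ Fin a ⊕ Fin b → ℤ :=
    fun u => if Tside a b u then -(Tdep a b u : ℤ) else Tdep a b u + 1 with hf
  have hlip : ∀ u v, (Tndab 5 a b).Adj u v → f v ≤ f u + 1 ∧ f u ≤ f v + 1 := by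
    refine Tadj_ind a b _ (fun x y h => h.symm) ?_ ?_ ?_
    · intro i
      fin_cases i <;> simp [hf, Tside, Tdep]
    · intro j
      simp [hf, Tside, Tdep]
    · intro j
      simp [hf, Tside, Tdep]
  have dt : ∀ u, Tside a b u = true → (Tndab 5 a b).dist u (Sum.inl 2) ≤ Tdep a b u := by
    intro u hu
    obtain ⟨p, hp⟩ := Tconn_aux a b u
    have h := (SimpleGraph.dist_le p).trans hp
    rwa [if_pos hu] at h
  have df : ∀ u, Tside a b u = false → (Tndab 5 a b).dist u (Sum.inl 3) ≤ Tdep a b u := by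
    intro u hu
    obtain ⟨p, hp⟩ := Tconn_aux a b u
    have h := (SimpleGraph.dist_le p).trans hp
    rwa [if_neg (by simp [hu])] at h
  have oppA : ∀ u v, Tside a b u = true → Tside a b v = false →
      (Tndab 5 a b).dist u v = Tdep a b u + Tdep a b v + 1 := by
    intro u v hu hv
    have b1 := lip_dist hc f (fun u v h => (hlip u v h).1) u v
    simp only [hf, hu, hv] at b1
    have b2 : (Tndab 5 a b).dist u v ≤ (Tndab 5 a b).dist u (Sum.inl 2) +
      (Tndab 5 a b).dist (Sum.inl 2) v := hc.dist_triangle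
    have b3 : (Tndab 5 a b).dist (Sum.inl 2) v ≤ (Tndab 5 a b).dist (Sum.inl 2) (Sum.inl 3) +
      (Tndab 5 a b).dist (Sum.inl 3) v := hc.dist_triangle
    have b4 : (Tndab 5 a b).dist (Sum.inl 2) (Sum.inl 3) = 1 :=
      SimpleGraph.dist_eq_one_iff_adj.2 (Tadj_path a b 2)
    have b5 := dt u hu
    have b6 := df v hv
    rw [SimpleGraph.dist_comm] at b6
    simp at b1
    omega
  refine ⟨?_, ?_, ?_, rfl, rfl, rfl, rfl⟩
  · intro u v h
    cases hu : Tside a b u <;> cases hv : Tside a b v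
    · simp [hu, hv] at h
    · rw [SimpleGraph.dist_comm, oppA v u hv hu]; omega
    · exact oppA u v hu hv
    · simp [hu, hv] at h
  · intro u v h
    cases hu : Tside a b u
    · have h1 := df u hu
      have h2 := df v (h ▸ hu)
      rw [SimpleGraph.dist_comm] at h2
      exact hc.dist_triangle.trans (Nat.add_le_add h1 h2)
    · have h1 := dt u hu
      have h2 := dt v (h ▸ hu)
      rw [SimpleGraph.dist_comm] at h2
      exact hc.dist_triangle.trans (Nat.add_le_add h1 h2)
  · rintro (i | j | j)
    · fin_cases i <;> simp [Tdep]
    · simp [Tdep]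
    · simp [Tdep]

lemma Tmin (a b : ℕ) (t : ℝ) (ht : 0 < t) (hPx : 16 * (a : ℝ) + 25 < t ^ 2)
    (hf : (t ^ 2 - (16 * (a : ℝ) + 25)) * (t ^ 2 - (16 * (b : ℝ) + 25)) = 25 * t ^ 2) :
    minEig (eccMatrix (Tndab 5 a b)) = -t := by
  have S := Tspl a b
  have : Nonempty (Fin 6 ⊕ Fin a ⊕ Fin b) := ⟨Sum.inl 0⟩
  set α : ℝ := t ^ 2 - (16 * (a : ℝ) + 25) with hα
  have hα0 : 0 < α := by rw [hα]; linarith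
  set δ : ℝ := α / t with hδ
  have hδ0 : 0 < δ := by positivity
  have htδ : t * δ = α := by rw [hδ]; field_simp
  have key : 25 * t + δ * (16 * b + 25) = t * α := by
    have : t * (25 * t + δ * (16 * b + 25)) = t * (t * α) := by
      linear_combination (16 * (b : ℝ) + 25) * htδ - hf
    exact mul_left_cancel₀ ht.ne' this
  set z : Fin 6 ⊕ Fin a ⊕ Fin b → ℝ :=
    Sum.elim ![α, 20, 15, 3 * δ, 4 * δ, 5 * t] (Sum.elim (fun _ => 20) (fun _ => 4 * δ)) with hz
  have zpos : ∀ v, 0 < z v := by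
    rintro (i | j | j)
    · fin_cases i <;> simp [hz, hα0, hδ0, ht]
    · simp [hz]
    · simp [hz, hδ0]
  have row : ∀ i, ∑ j, eccMatrix (Tndab 5 a b) i j * z j = t * z i := by
    intro i
    have e6 : ∀ g : Fin (5 + 1) → ℝ, ∑ i, g i = g 0 + g 1 + g 2 + g 3 + g 4 + g 5 :=
      fun g => Fin.sum_univ_six g
    simp only [Fintype.sum_sum_type, e6, S.mat]
    rcases i with i | j | j
    · fin_cases i
      · simp [Tside, Tdep, hz]
        linear_combination key
      · simp [Tside, Tdep, hz]
        linear_combination 0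
      · simp [Tside, Tdep, hz]
        linear_combination 0
      · simp [Tside, Tdep, hz]
        linear_combination -3 * htδ
      · simp [Tside, Tdep, hz]
        linear_combination -4 * htδ
      · simp [Tside, Tdep, hz]
        linear_combination 5 * hα
    · simp [Tside, Tdep, hz]
      linear_combination 0
    · simp [Tside, Tdep, hz]
      linear_combination -4 * htδ
  apply le_antisymm
  · refine (minEig_le _ (eccMatrix_symm _) (Tside a b) ?_ z zpos t fun i => (row i).ge).1
    intro i j hij
    rw [S.mat, if_neg (by simp [hij])]
  · exact minEig_ge _ (eccMatrix_symm _) (eccMatrix_nonneg _) z zpos t row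

lemma iso_dist {V W : Type*} {G : SimpleGraph V} {H : SimpleGraph W} (e : G ≃g H)
    (hG : G.Connected) (u v : V) : H.dist (e u) (e v) = G.dist u v := by
  apply le_antisymm
  · obtain ⟨p, hp⟩ := hG.exists_walk_length_eq_dist u v
    rw [← hp, ← Walk.length_map e.toHom p]
    exact SimpleGraph.dist_le _
  · obtain ⟨p, hp⟩ := (e.connected_iff.1 hG).exists_walk_length_eq_dist (e u) (e v)
    rw [← hp, ← Walk.length_map e.symm.toHom p]
    have := SimpleGraph.dist_le (p.map e.symm.toHom)
    simpa using this

lemma iso_minEig {V W : Type*} [Fintype V] [DecidableEq V] [Fintype W] [DecidableEq W]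
    {G : SimpleGraph V} {H : SimpleGraph W} (e : G ≃g H)
    (hG : G.Connected) : minEig (eccMatrix G) = minEig (eccMatrix H) := by
  have hecc : ∀ u, ecc H (e u) = ecc G u := by
    intro u
    apply le_antisymm
    · refine Finset.sup_le fun v _ => ?_
      rw [← e.apply_symm_apply v, iso_dist e hG]
      exact Finset.le_sup (f := fun v => G.dist u v) (Finset.mem_univ _)
    · refine Finset.sup_le fun v _ => ?_
      rw [← iso_dist e hG]
      exact Finset.le_sup (f := fun v => H.dist (e u) v) (Finset.mem_univ _)
  have : eccMatrix H = Matrix.reindex e.toEquiv e.toEquiv (eccMatrix G) := by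
    ext u v
    obtain ⟨u, rfl⟩ := e.surjective u
    obtain ⟨v, rfl⟩ := e.surjective v
    have h1 : e.toEquiv.symm (e u) = u := e.toEquiv.symm_apply_apply u
    have h2 : e.toEquiv.symm (e v) = v := e.toEquiv.symm_apply_apply v
    simp only [eccMatrix, Matrix.reindex_apply, Matrix.submatrix_apply, Matrix.of_apply, h1, h2,
      hecc, iso_dist e hG]
  rw [this, minEig, minEig, Matrix.charpoly_reindex]

end Extremal


section Main
variable {V : Type*} [Fintype V] [DecidableEq V]
variable {T : SimpleGraph V} {side : V → Bool} {dep : V → ℕ} {r : ℕ} {x0 y0 c1 c2 : V}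

lemma CSpl.parent (S : CSpl T side dep 2 x0 y0 c1 c2) :
    ∃ p, side p = true ∧ dep p = 1 ∧ T.Adj x0 p ∧ T.Adj p c1 := by
  have h2 : T.dist x0 c1 = 2 := by rw [← S.d1 x0 S.sx, S.dx]
  obtain ⟨w, hw⟩ := S.conn.exists_walk_length_eq_dist x0 c1
  rw [h2] at hw
  have a1 : T.Adj (w.getVert 0) (w.getVert 1) := w.adj_getVert_succ (by omega)
  have a2 : T.Adj (w.getVert 1) (w.getVert 2) := w.adj_getVert_succ (by omega)
  rw [← hw, Walk.getVert_length] at a2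
  rw [Walk.getVert_zero] at a1
  have e1 := SimpleGraph.dist_eq_one_iff_adj.2 a1
  have e2 := SimpleGraph.dist_eq_one_iff_adj.2 a2
  have hs : side (w.getVert 1) = true := by
    by_contra h
    rw [Bool.not_eq_true] at h
    have := S.opp x0 (w.getVert 1) (by simp [h, S.sx])
    have := S.dx
    omega
  refine ⟨w.getVert 1, hs, ?_, a1, a2⟩
  rw [S.d1 _ hs, e2]

lemma CSpl.leaves (S : CSpl T side dep 2 x0 y0 c1 c2) (a : ℕ)
    (ha : (Finset.univ.filter fun v => side v = true).card = a + 3) (p : V)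
    (hp : side p = true) (hp1 : dep p = 1) :
    ∃ g : Fin a → V, (∀ v, side v = true → v = x0 ∨ v = p ∨ v = c1 ∨ ∃ j, g j = v) ∧
      ∀ j, side (g j) = true ∧ g j ≠ x0 ∧ g j ≠ c1 := by
  have h1 : x0 ≠ p := fun h => by have := S.dx; rw [h, hp1] at this; omega
  have h2 : c1 ≠ p := fun h => by have := S.dc1; rw [h, hp1] at this; omega
  have h3 : c1 ≠ x0 := fun h => by have := S.dc1; rw [h, S.dx] at this; omega
  set A := (((Finset.univ.filter fun v => side v = true).erase x0).erase p).erase c1 with hA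
  have hc : A.card = a := by
    rw [hA, Finset.card_erase_of_mem, Finset.card_erase_of_mem, Finset.card_erase_of_mem, ha]
    · omega
    · simp [S.sx]
    · simp [hp, h1.symm]
    · simp [h2, h3, S.s1]
  let e := A.equivFinOfCardEq hc
  refine ⟨fun j => (e.symm j : V), ?_, ?_⟩
  · intro v hv
    by_cases hvA : v ∈ A
    · right; right; right
      exact ⟨e ⟨v, hvA⟩, by simp⟩
    · simp only [hA, Finset.mem_erase, Finset.mem_filter, Finset.mem_univ, true_and] at hvA
      tauto
  · intro j
    have := (e.symm j).2
    simp only [hA, Finset.mem_erase, Finset.mem_filter, Finset.mem_univ, true_and] at this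
    exact ⟨this.2.2.2, this.2.2.1, this.1⟩

lemma CSpl.iso (S : CSpl T side dep 2 x0 y0 c1 c2) (hT : T.IsTree) (a b : ℕ)
    (ha : (Finset.univ.filter fun v => side v = true).card = a + 3)
    (hb : (Finset.univ.filter fun v => side v = false).card = b + 3)
    (hu : ∀ u, dep u = 2 → u = x0 ∨ u = y0) : Nonempty (T ≃g Tndab 5 a b) := by
  obtain ⟨p, hp, hp1, hxp, hpc⟩ := S.parent
  obtain ⟨q, hq, hq1, hyq, hqc⟩ := S.swap.parent
  obtain ⟨g, hg, hg'⟩ := S.leaves a ha p hp hp1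
  obtain ⟨k, hk, hk'⟩ := S.swap.leaves b (by simpa using hb) q hq hq1
  simp only [Bool.not_eq_true'] at hq hk hk'
  set f : Fin 6 ⊕ Fin a ⊕ Fin b → V := Sum.elim ![x0, p, c1, c2, q, y0] (Sum.elim g k) with hf
  have hsurj : Function.Surjective f := by
    intro v
    cases hv : side v
    · rcases hk v hv with rfl | rfl | rfl | ⟨j, rfl⟩
      · exact ⟨Sum.inl 5, rfl⟩
      · exact ⟨Sum.inl 4, rfl⟩
      · exact ⟨Sum.inl 3, rfl⟩
      · exact ⟨Sum.inr (Sum.inr j), rfl⟩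
    · rcases hg v hv with rfl | rfl | rfl | ⟨j, rfl⟩
      · exact ⟨Sum.inl 0, rfl⟩
      · exact ⟨Sum.inl 1, rfl⟩
      · exact ⟨Sum.inl 2, rfl⟩
      · exact ⟨Sum.inr (Sum.inl j), rfl⟩
  have hcard : Fintype.card (Fin 6 ⊕ Fin a ⊕ Fin b) = Fintype.card V := by
    have h1 := Finset.card_filter_add_card_filter_not (s := (Finset.univ : Finset V))
      (fun v => side v = true)
    simp only [Bool.not_eq_true] at h1
    rw [ha, hb, Finset.card_univ] at h1
    simp; omega
  have hbij : Function.Bijective f := (Fintype.bijective_iff_surjective_and_card f).2 ⟨hsurj, hcard⟩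
  let e := Equiv.ofBijective f hbij
  have h12 : T.Adj c1 c2 := by
    rw [← SimpleGraph.dist_eq_one_iff_adj, S.opp _ _ (by simp [S.s1, S.s2]), S.dc1, S.dc2]
  have hle : Tndab 5 a b ≤ T.comap f := by
    intro x y
    refine Tadj_ind a b (fun x y => (T.comap f).Adj x y) (fun x y h => h.symm) ?_ ?_ ?_ x y
    · intro i
      rw [SimpleGraph.comap_adj]
      fin_cases i
      · exact hxp
      · exact hpc
      · exact h12
      · exact hqc.symm
      · exact hyq.symm
    · intro j
      rw [SimpleGraph.comap_adj]
      change T.Adj c1 (g j)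
      obtain ⟨g1, g2, g3⟩ := hg' j
      have gy : g j ≠ y0 := fun h => by rw [h, S.sy] at g1; simp at g1
      have gc : g j ≠ c2 := fun h => by rw [h, S.s2] at g1; simp at g1
      have := S.pos _ g3 gc
      have := S.le (g j)
      have h3 : dep (g j) ≠ 2 := fun h => by rcases hu _ h with h | h <;> contradiction
      have h4 := S.d1 _ g1
      rw [← SimpleGraph.dist_eq_one_iff_adj, SimpleGraph.dist_comm]
      omega
    · intro j
      rw [SimpleGraph.comap_adj]
      change T.Adj c2 (k j)
      obtain ⟨g1, g2, g3⟩ := hk' j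
      have gy : k j ≠ x0 := fun h => by rw [h, S.sx] at g1; simp at g1
      have gc : k j ≠ c1 := fun h => by rw [h, S.s1] at g1; simp at g1
      have := S.pos _ gc g3
      have := S.le (k j)
      have h3 : dep (k j) ≠ 2 := fun h => by rcases hu _ h with h | h <;> contradiction
      have h4 := S.d2 _ g1
      rw [← SimpleGraph.dist_eq_one_iff_adj, SimpleGraph.dist_comm]
      omega
  let I : T.comap f ≃g T := ⟨e, by intro x y; rfl⟩
  have htree : (T.comap f).IsTree := I.isTree_iff.2 hT
  have heq : T.comap f = Tndab 5 a b :=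
    le_antisymm ((isTree_iff_minimal_connected.1 htree).2 (Tconn a b) hle) hle
  rw [heq] at I
  exact ⟨I.symm⟩

lemma main_aux (S : CSpl T side dep r x0 y0 c1 c2) (hT : T.IsTree) (a b : ℕ) (hab : a ≤ b)
    (hba : b ≤ a + 1) (hcard : Fintype.card V = a + b + 6) (h10 : 10 ≤ a + b)
    (hle : (Finset.univ.filter fun v => side v = true).card ≤
      (Finset.univ.filter fun v => side v = false).card)
    (t : ℝ) (ht : 0 < t)
    (hf : (t ^ 2 - (16 * (a : ℝ) + 25)) * (t ^ 2 - (16 * (b : ℝ) + 25)) = 25 * t ^ 2)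
    (hbig : 8 * ((a : ℝ) + b) + 37 ≤ t ^ 2) :
    Nonempty (T ≃g Tndab 5 a b) ∨ minEig (eccMatrix T) < -t := by
  have hsum := Finset.card_filter_add_card_filter_not (s := (Finset.univ : Finset V))
      (fun v => side v = true)
  simp only [Bool.not_eq_true] at hsum
  rw [Finset.card_univ, hcard] at hsum
  set N1 := (Finset.univ.filter fun v => side v = true).card with hN1
  set N2 := (Finset.univ.filter fun v => side v = false).card with hN2
  have hsumR : (N1 : ℝ) + N2 = a + b + 6 := by exact_mod_cast hsum
  have hleR : (N1 : ℝ) ≤ N2 := by exact_mod_cast hle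
  have habR : (a : ℝ) ≤ b := by exact_mod_cast hab
  have hbaR : (b : ℝ) ≤ a + 1 := by exact_mod_cast hba
  have h10R : (10 : ℝ) ≤ a + b := by exact_mod_cast h10
  rcases Nat.lt_or_ge r 2 with hr | hr
  · right
    rcases Nat.lt_or_ge r 1 with hr0 | hr1
    · exfalso
      have hsub : (Finset.univ : Finset V) ⊆ {c1, c2} := by
        intro v _
        by_contra hv
        simp only [Finset.mem_insert, Finset.mem_singleton, not_or] at hv
        have := S.pos v hv.1 hv.2
        have := S.le v
        omega
      have h1 := Finset.card_le_card hsub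
      have h2 : ({c1, c2} : Finset V).card ≤ 2 := Finset.card_le_two
      rw [Finset.card_univ] at h1
      omega
    · obtain rfl : r = 1 := by omega
      have x1 : x0 ≠ c1 := fun h => by have := S.dx; rw [h, S.dc1] at this; omega
      have hN12 : 1 < N1 := by
        rw [hN1, Finset.one_lt_card]
        exact ⟨x0, by simp [S.sx], c1, by simp [S.s1], x1⟩
      have hA : (1 : ℝ) ≤ (N1 : ℝ) - 1 := by
        have : (2 : ℝ) ≤ N1 := by exact_mod_cast hN12
        linarith
      have hB : (1 : ℝ) ≤ (N2 : ℝ) - 1 := by linarith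
      refine S.bound1 t _ _ ht rfl rfl (by linarith) (by linarith) ?_ ?_
      · rw [← hN2]; linarith
      · rw [← hN1, ← hN2]
        set x := t ^ 2
        set A := (N1 : ℝ) - 1 with hAd
        set B := (N2 : ℝ) - 1 with hBd
        set s := (a : ℝ) + b with hs
        have hABs : A + B = s + 4 := by rw [hAd, hBd, hs]; linarith
        have hAB : s + 3 ≤ A * B := by nlinarith
        -- product of the extremal constants
        have hC : (8 * s + 25) ^ 2 - 64 ≤ (16 * (a : ℝ) + 25) * (16 * (b : ℝ) + 25) := by
          have e : (16 * (a : ℝ) + 25) * (16 * (b : ℝ) + 25) =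
            (8 * s + 25) ^ 2 - 64 * (b - a) ^ 2 := by rw [hs]; ring
          rw [e]
          nlinarith
        set C := (16 * (a : ℝ) + 25) * (16 * (b : ℝ) + 25) with hCd
        have hq : x ^ 2 - (16 * s + 75) * x + C = 0 := by
          rw [hCd, hs]; linear_combination hf
        have hxle : x ≤ 79 / 8 * s + 289 / 4 := by
          by_contra hcon
          push Not at hcon
          have h1 : 0 < (x - (79 / 8 * s + 289 / 4)) * (x + (79 / 8 * s + 289 / 4) - (16 * s + 75)) :=
            mul_pos (by linarith) (by linarith)
          nlinarith [sq_nonneg (s - 10)]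
        have h3 : (3 * s + 32) * x < C - 16 * s - 48 := by
          have : (3 * s + 32) * x ≤ (3 * s + 32) * (79 / 8 * s + 289 / 4) :=
            mul_le_mul_of_nonneg_left hxle (by linarith)
          nlinarith
        have h4 : (9 * x - 16) * (s + 3) ≤ (9 * x - 16) * (A * B) :=
          mul_le_mul_of_nonneg_left hAB (by linarith)
        have h5 : (x - 4 * A) * (x - 4 * B) = x ^ 2 - 4 * (s + 4) * x + 16 * (A * B) := by
          rw [← hABs]; ring
        rw [h5]
        nlinarith
  · have hN1le : N1 ≤ a + 3 := by omega
    obtain ⟨k, hk⟩ := Nat.exists_eq_add_of_le hN1le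
    have hk2 : N2 = b + 3 + k := by omega
    have hkR : (N1 : ℝ) = a + 3 - k := by
      have : (a : ℝ) + 3 = N1 + k := by exact_mod_cast hk
      linarith
    have hk2R : (N2 : ℝ) = b + 3 + k := by exact_mod_cast hk2
    have hk0 : (0 : ℝ) ≤ k := Nat.cast_nonneg k
    have hdiff : 25 * t ^ 2 - (t ^ 2 - (16 * (N1 : ℝ) - 23)) * (t ^ 2 - (16 * (N2 : ℝ) - 23)) =
        256 * k * (b - a) + 256 * k ^ 2 := by
      rw [hkR, hk2R]
      linear_combination -hf
    have hnn : (0 : ℝ) ≤ 256 * k * (b - a) := mul_nonneg (by positivity) (by linarith)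
    by_cases hall : k = 0 ∧ r = 2 ∧ ∀ u, dep u = 2 → u = x0 ∨ u = y0
    · left
      obtain ⟨rfl, rfl, h3⟩ := hall
      exact S.iso hT a b (by omega) (by omega) h3
    · right
      refine S.bound2 hr t _ _ ht rfl rfl ?_ ?_ ?_
      · rw [← hN1]; linarith
      · rw [← hN1, ← hN2]
        nlinarith [sq_nonneg (k : ℝ)]
      · rw [← hN1, ← hN2]
        by_cases hk1 : k = 0
        · right
          by_cases hr2 : r = 2
          · right
            by_contra hcon
            push Not at hcon
            refine hall ⟨hk1, hr2, fun u hu => ?_⟩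
            by_contra h
            push Not at h
            exact hcon u h.1 h.2 (by rw [hu, hr2])
          · left; exact hr2
        · left
          have : (0 : ℝ) < k := by exact_mod_cast Nat.pos_of_ne_zero hk1
          have : (0 : ℝ) < 256 * (k : ℝ) ^ 2 := by positivity
          linarith

lemma main_thm (T : SimpleGraph V) (hT : T.IsTree) (hodd : Odd (gdiam T)) (a b : ℕ) (hab : a ≤ b)
    (hba : b ≤ a + 1) (hcard : Fintype.card V = a + b + 6) (h10 : 10 ≤ a + b) (D : ℝ)
    (hD : D = 625 + 50 * (16 * ((a : ℝ) + b) + 50) + 256 * ((b : ℝ) - a) ^ 2) :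
    minEig (eccMatrix T) ≤ -Real.sqrt ((16 * ((a : ℝ) + b) + 75 + Real.sqrt D) / 2) ∧
      (minEig (eccMatrix T) = -Real.sqrt ((16 * ((a : ℝ) + b) + 75 + Real.sqrt D) / 2) ↔
        Nonempty (T ≃g Tndab 5 a b)) := by
  obtain ⟨r, hr⟩ := hodd
  obtain ⟨side, dep, x0, y0, c1, c2, S⟩ := exists_cspl T hT r hr
  have hD0 : 0 ≤ D := by rw [hD]; positivity
  have hsq := Real.sq_sqrt hD0
  have hs0 := Real.sqrt_nonneg D
  set q := Real.sqrt D
  set x := (16 * ((a : ℝ) + b) + 75 + q) / 2 with hx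
  have hx0 : 0 < x := by positivity
  have htx : Real.sqrt x ^ 2 = x := Real.sq_sqrt hx0.le
  have ht : 0 < Real.sqrt x := Real.sqrt_pos.2 hx0
  set t := Real.sqrt x
  have habR : (a : ℝ) ≤ b := by exact_mod_cast hab
  have hf : (t ^ 2 - (16 * (a : ℝ) + 25)) * (t ^ 2 - (16 * (b : ℝ) + 25)) = 25 * t ^ 2 := by
    rw [htx, hx]
    linear_combination (1 / 4 : ℝ) * (hsq + hD)
  have hbig : 8 * ((a : ℝ) + b) + 37 ≤ t ^ 2 := by
    rw [htx, hx]; linarith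
  have h1 : Nonempty (T ≃g Tndab 5 a b) ∨ minEig (eccMatrix T) < -t := by
    rcases le_total (Finset.univ.filter fun v => side v = true).card
      (Finset.univ.filter fun v => side v = false).card with hle | hle
    · exact main_aux S hT a b hab hba hcard h10 hle t ht hf hbig
    · exact main_aux S.swap hT a b hab hba hcard h10 (by simpa using hle) t ht hf hbig
  have h2 : Nonempty (T ≃g Tndab 5 a b) → minEig (eccMatrix T) = -t := by
    rintro ⟨e⟩
    rw [iso_minEig e hT.connected]
    exact Tmin a b t ht (by linarith) hf
  refine ⟨?_, fun h => ?_, h2⟩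
  · rcases h1 with h | h
    · exact (h2 h).le
    · exact h.le
  · rcases h1 with h' | h'
    · exact h'
    · exact absurd h h'.ne

end Main


/-- Upper bound on the least eccentricity eigenvalue of a tree on `n ≥ 16` vertices with odd
diameter, with equality iff `T ≅ T_{n,5}^{⌊(n-6)/2⌋, ⌈(n-6)/2⌉}`. -/
theorem stmt8 {V : Type*} [Fintype V] [DecidableEq V] (T : SimpleGraph V) (n : ℕ)
    (hT : T.IsTree) (hn : Fintype.card V = n) (h16 : 16 ≤ n) (hodd : Odd (gdiam T)) :
    (Odd n →
      minEig (eccMatrix T) ≤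
          -Real.sqrt ((16*(n:ℝ) - 21 + Real.sqrt (800*(n:ℝ) - 1419))/2) ∧
      (minEig (eccMatrix T) =
          -Real.sqrt ((16*(n:ℝ) - 21 + Real.sqrt (800*(n:ℝ) - 1419))/2) ↔
        Nonempty (T ≃g Tndab 5 ((n-6)/2) ((n-5)/2)))) ∧
    (Even n →
      minEig (eccMatrix T) ≤
          -Real.sqrt ((16*(n:ℝ) - 21 + 5*Real.sqrt (32*(n:ℝ) - 67))/2) ∧
      (minEig (eccMatrix T) =
          -Real.sqrt ((16*(n:ℝ) - 21 + 5*Real.sqrt (32*(n:ℝ) - 67))/2) ↔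
        Nonempty (T ≃g Tndab 5 ((n-6)/2) ((n-5)/2)))) := by
  constructor
  · rintro ⟨m, hm⟩
    obtain ⟨k, rfl⟩ := Nat.exists_eq_add_of_le (show 3 ≤ m by omega)
    have e1 : (n - 6) / 2 = k := by omega
    have e2 : (n - 5) / 2 = k + 1 := by omega
    have hnR : (n : ℝ) = 2 * (3 + k) + 1 := by exact_mod_cast hm
    rw [e1, e2]
    have h := main_thm T hT hodd k (k + 1) (by omega) (by omega) (by omega) (by omega)
      (800 * (n : ℝ) - 1419) (by rw [hnR]; push_cast; ring)
    have e3 : 16 * ((k : ℝ) + ((k + 1 : ℕ) : ℝ)) + 75 = 16 * (n : ℝ) - 21 := by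
      rw [hnR]; push_cast; ring
    rw [e3] at h
    exact h
  · rintro ⟨m, hm⟩
    obtain ⟨k, rfl⟩ := Nat.exists_eq_add_of_le (show 3 ≤ m by omega)
    have e1 : (n - 6) / 2 = k := by omega
    have e2 : (n - 5) / 2 = k := by omega
    have hnR : (n : ℝ) = (3 + k) + (3 + k) := by exact_mod_cast hm
    rw [e1, e2]
    have h := main_thm T hT hodd k k (by omega) (by omega) (by omega) (by omega)
      (5 ^ 2 * (32 * (n : ℝ) - 67)) (by rw [hnR]; ring)
    have e3 : 16 * ((k : ℝ) + (k : ℝ)) + 75 = 16 * (n : ℝ) - 21 := by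
      rw [hnR]; ring
    have e4 : Real.sqrt (5 ^ 2 * (32 * (n : ℝ) - 67)) = 5 * Real.sqrt (32 * (n : ℝ) - 67) := by
      rw [Real.sqrt_mul (by norm_num), Real.sqrt_sq (by norm_num)]
    rw [e3, e4] at h
    exact h
end

section
/- For integers l ≥ 2 and d ≥ 1, let A be the (2l+1) × (2l+1) real symmetric matrix with rows and columns indexed by v₁,…,v_l, u₁,…,u_l, u₀, whose entries are: A_{v_i v_j} = 2d for i ≠ j, A_{v_i u_j} = A_{u_j v_i} = d+1 for i ≠ j, A_{v_i u_i} = A_{u_i v_i} = 0, A_{v_i u₀} = A_{u₀ v_i} = d, and all remaining entries (the v_iv_i diagonal, all entries among u₀, u₁, …, u_l) equal to 0. Then the sum E_{2l−1}(A) of all (2l−1) × (2l−1) principal minors of A is non-zero. -/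
open SimpleGraph Finset Matrix Polynomial

/-- The `(2l+1) × (2l+1)` matrix `A` indexed by `v₁, …, v_l` (the `Sum.inl` indices),
`u₁, …, u_l` (the `Sum.inr ∘ Sum.inl` indices) and `u₀` (the `Sum.inr (Sum.inr ())` index). -/
def matA (l d : ℕ) : Matrix (Fin l ⊕ Fin l ⊕ Unit) (Fin l ⊕ Fin l ⊕ Unit) ℝ :=
  Matrix.of fun x y =>
    match x, y with
    | Sum.inl i, Sum.inl j => if i = j then 0 else 2*d
    | Sum.inl i, Sum.inr (Sum.inl j) => if i = j then 0 else d+1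
    | Sum.inr (Sum.inl i), Sum.inl j => if i = j then 0 else d+1
    | Sum.inl _, Sum.inr (Sum.inr _) => d
    | Sum.inr (Sum.inr _), Sum.inl _ => d
    | _, _ => 0

/-- `sumPrincMinors M k` is `E_k(M)`, the sum of all `k × k` principal minors of `M`. -/
noncomputable def sumPrincMinors {m : Type*} [Fintype m] [DecidableEq m]
    (M : Matrix m m ℝ) (k : ℕ) : ℝ :=
  ∑ S ∈ Finset.univ.powersetCard k,
    (M.submatrix (fun x : {x : m // x ∈ S} => x.1) (fun x : {x : m // x ∈ S} => x.1)).det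

/-- Determinant of `αI + βJ`. -/
theorem det_alpha_beta (n : ℕ) (a b : ℝ) (ha : a ≠ 0) :
    (Matrix.of fun i j : Fin (n+2) => if i = j then a + b else b).det
      = a ^ (n+1) * (a + (n+2) * b) := by
  have h : (Matrix.of fun i j : Fin (n+2) => if i = j then a + b else b)
      = a • (1 + replicateCol Unit (fun _ => b / a) * replicateRow Unit (fun _ => (1:ℝ))) := by
    ext i j
    by_cases hij : i = j
    · subst hij
      simp [Matrix.mul_apply, mul_add]
      field_simp
    · simp [Matrix.mul_apply, hij]
      field_simp
  rw [h, det_smul, det_one_add_replicateCol_mul_replicateRow]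
  simp [dotProduct]
  field_simp
  ring

/-- Blocks of the matrix. -/
theorem eval_charpoly_matA (n d : ℕ) (x : ℝ) (hx : (d:ℝ) + 1 < x) :
    (matA (n+2) d).charpoly.eval x =
      x * (x^2 + 2*d*x - (d+1)^2)^(n+1)
        * (x^2 - 2*d*(n+1)*x - ((d+1)^2*(n+1)^2 + d^2*(n+2))) := by
  have hd0 : (0:ℝ) ≤ d := Nat.cast_nonneg d
  have hx0 : 0 < x := by linarith
  have hx1 : x ≠ 0 := hx0.ne'
  have hsq : 0 < x^2 + 2*d*x - (d+1)^2 := by nlinarith [mul_nonneg hd0 hx0.le]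
  rw [Matrix.eval_charpoly]
  let N : Matrix (Fin (n+2)) (Fin (n+2) ⊕ Unit) ℝ :=
    Matrix.of fun i s => Sum.elim (fun j => if i = j then 0 else -((d:ℝ)+1)) (fun _ => -(d:ℝ)) s
  let M : Matrix (Fin (n+2)) (Fin (n+2)) ℝ :=
    Matrix.of fun i j => if i = j then x else -(2*d : ℝ)
  have hblock : Matrix.scalar _ x - matA (n+2) d
      = fromBlocks M N Nᵀ (x • (1 : Matrix (Fin (n+2) ⊕ Unit) (Fin (n+2) ⊕ Unit) ℝ)) := by
    ext i j
    rcases i with i | i | i <;> rcases j with j | j | j <;>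
      simp [matA, M, N, Matrix.diagonal_apply, Matrix.one_apply] <;>
      split_ifs <;> simp_all
  let _ : Invertible (x • (1 : Matrix (Fin (n+2) ⊕ Unit) (Fin (n+2) ⊕ Unit) ℝ)) :=
    ⟨x⁻¹ • 1, by simp [smul_smul, hx1], by simp [smul_smul, hx1]⟩
  have hinv : ⅟(x • (1 : Matrix (Fin (n+2) ⊕ Unit) (Fin (n+2) ⊕ Unit) ℝ)) = x⁻¹ • 1 := rfl
  have hNN : N * Nᵀ = Matrix.of fun i j =>
      if i = j then ((d:ℝ)+1)^2 * (n+1) + d^2 else ((d:ℝ)+1)^2 * n + (d:ℝ)^2 := by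
    ext i j
    have hs : ∀ k : Fin (n+2), N i (Sum.inl k) * N j (Sum.inl k)
        = ((d:ℝ)+1)^2 * (1 - (if i = k then 1 else 0) - (if j = k then 1 else 0)
          + (if i = k then (if j = i then 1 else 0) else 0)) := by
      intro k
      simp only [N, Matrix.of_apply, Sum.elim_inl]
      split_ifs <;> simp_all <;> ring
    rw [Matrix.mul_apply, Fintype.sum_sum_type]
    simp only [Matrix.transpose_apply, hs]
    rw [← Finset.mul_sum]
    simp only [Finset.sum_add_distrib, Finset.sum_sub_distrib, Finset.sum_ite_eq, N]
    by_cases hij : i = j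
    · subst hij; simp; ring
    · have : j ≠ i := fun h => hij h.symm
      simp [hij, this]; ring
  have hM : M - N * ⅟(x • (1 : Matrix (Fin (n+2) ⊕ Unit) (Fin (n+2) ⊕ Unit) ℝ)) * Nᵀ
      = Matrix.of fun i j : Fin (n+2) =>
        if i = j then ((x^2 + 2*d*x - (d+1)^2)/x) + (-(2*d) - ((d+1)^2*n + d^2)/x)
          else (-(2*d) - (((d:ℝ)+1)^2*n + d^2)/x) := by
    rw [hinv, Matrix.mul_smul, Matrix.smul_mul, Matrix.mul_one, hNN]
    ext i j
    by_cases hij : i = j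
    · simp [M, hij]; field_simp; ring
    · simp [M, hij]; field_simp
  rw [hblock, det_fromBlocks₂₂, hM, det_alpha_beta _ _ _ (div_pos hsq hx0).ne', det_smul]
  simp only [det_one, Fintype.card_sum, Fintype.card_fin, Fintype.card_unit, mul_one, div_pow]
  rw [show x ^ (n + 2 + 1) = x ^ (n+1) * x^2 by ring]
  field_simp
  ring

theorem charpoly_matA (n d : ℕ) :
    (matA (n+2) d).charpoly =
      X * ((X^2 + C (2*d:ℝ) * X - C (((d:ℝ)+1)^2))^(n+1)
        * (X^2 - C (2*d*(n+1):ℝ)*X - C (((d:ℝ)+1)^2*(n+1)^2 + d^2*(n+2)))) := by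
  apply Polynomial.eq_of_infinite_eval_eq
  apply (Set.Ioi_infinite ((d:ℝ)+1)).mono
  intro x hx
  simp only [Set.mem_ofPred_eq]
  rw [eval_charpoly_matA n d x hx]
  simp only [eval_mul, eval_pow, eval_add, eval_sub, eval_X, eval_C]
  ring

theorem coeff_one_eq (p : ℝ[X]) : p.coeff 1 = p.derivative.eval 0 := by
  rw [← Polynomial.coeff_zero_eq_eval_zero, Polynomial.coeff_derivative]
  simp

/-- For `l ≥ 2` and `d ≥ 1`, the sum of all `(2l-1) × (2l-1)` principal minors of the matrix
`A` is non-zero. -/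
theorem stmt9 (l d : ℕ) (hl : 2 ≤ l) (hd : 1 ≤ d) :
    sumPrincMinors (matA l d) (2*l - 1) ≠ 0 := by
  obtain ⟨n, rfl⟩ : ∃ n, l = n + 2 := ⟨l - 2, by omega⟩
  have hc := Matrix.charpoly_coeff_eq_sum_minors (matA (n+2) d) (2*(n+2)-1)
    (by simp; omega)
  have hcard : Fintype.card (Fin (n+2) ⊕ Fin (n+2) ⊕ Unit) - (2*(n+2)-1) = 2 := by
    simp; omega
  rw [hcard, charpoly_matA, Polynomial.coeff_X_mul, coeff_one_eq] at hc
  intro h0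
  unfold sumPrincMinors at h0
  have hz := hc.trans ((congrArg _ h0).trans (mul_zero _))
  have hd1 : (1:ℝ) ≤ d := by exact_mod_cast hd
  have hn0 : (0:ℝ) ≤ n := Nat.cast_nonneg n
  simp [derivative_pow] at hz
  have key : (2*d*(n+1):ℝ) * (-((d:ℝ)+1)^2)^n *
      ((d+1)^2 * (n^2+2*n) + d^2*(n+2)) = 0 := by
    rw [pow_succ] at hz
    linear_combination -hz
  have h1 : (2*d*(n+1):ℝ) ≠ 0 := by positivity
  have h2 : (-((d:ℝ)+1)^2)^n ≠ 0 := pow_ne_zero _ (neg_ne_zero.mpr (by positivity))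
  have h3 : (((d:ℝ)+1)^2 * (n^2+2*n) + d^2*(n+2)) ≠ 0 := by positivity
  exact mul_ne_zero (mul_ne_zero h1 h2) h3 key
end

section
/- For integers l ≥ 3 and d ≥ 1, let A be the (2l+1) × (2l+1) matrix with rows and columns indexed by v₁,…,v_l, u₁,…,u_l, u₀, whose entries are A_{v_i v_j} = 2d for i ≠ j, A_{v_i u_j} = A_{u_j v_i} = d+1 for i ≠ j, A_{v_i u_i} = A_{u_i v_i} = 0, A_{v_i u₀} = A_{u₀ v_i} = d, and all remaining entries zero. For each i ∈ {1, …, l}, the determinant of the (2l−1) × (2l−1) principal submatrix of A obtained by deleting the rows and columns indexed by u_i and u₀ equals (−1)^{l−2} · 2d · (l−1)(l−2) · (d+1)^{2(l−1)}. -/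
open SimpleGraph Finset Matrix Polynomial

lemma detK_aux {J : Type*} [Fintype J] [DecidableEq J] :
    (Matrix.of fun a b : J => if a = b then (0:ℝ) else 1).det
      = (-1)^(Fintype.card J) * (1 - (Fintype.card J : ℝ)) := by
  have h : (Matrix.of fun a b : J => if a = b then (0:ℝ) else 1)
      = -(1 + replicateCol Unit (fun _ : J => (1:ℝ)) * replicateRow Unit (fun _ : J => (-1:ℝ))) := by
    ext a b
    by_cases hab : a = b <;> simp [Matrix.mul_apply, Matrix.one_apply, hab]
  rw [h, Matrix.det_neg, Matrix.det_one_add_replicateCol_mul_replicateRow]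
  simp [dotProduct]
  ring

lemma detD_aux {J : Type*} [Fintype J] [DecidableEq J] (K : Matrix J J ℝ) (p c : ℝ) (hp : p ≠ 0) :
    (fromBlocks (p • K) (c • K) (c • K) 0).det
      = (-(c^2))^(Fintype.card J) * K.det^2 := by
  have h : fromBlocks (p • K) (c • K) (c • K) 0
      = fromBlocks 1 0 ((c/p) • (1 : Matrix J J ℝ)) 1
        * fromBlocks (p • K) (c • K) 0 ((-(c^2/p)) • K) := by
    rw [Matrix.fromBlocks_multiply]
    congr 1
    · simp
    · simp
    · simp [smul_smul]
      congr 1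
      field_simp
    · simp [smul_smul]
      rw [← sub_eq_add_neg, ← sub_smul]
      have : c * (c / p) - c^2/p = 0 := by ring
      rw [this, zero_smul]
  rw [h, Matrix.det_mul, Matrix.det_fromBlocks_zero₁₂, Matrix.det_fromBlocks_zero₂₁,
    Matrix.det_smul, Matrix.det_smul]
  have : (-(c^2))^(Fintype.card J) = p^(Fintype.card J) * (-(c^2/p))^(Fintype.card J) := by
    rw [← mul_pow]
    congr 1
    field_simp
  rw [this]
  simp
  ring

lemma detN_aux {m n : Type*} [Fintype m] [DecidableEq m] [Fintype n] [DecidableEq n]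
    (D : Matrix n n ℝ) (X : Matrix n m ℝ) (B : Matrix m n ℝ) :
    (fromBlocks 0 B (D * X) D).det = (-(B * X)).det * D.det := by
  have h : fromBlocks 0 B (D * X) D * fromBlocks 1 0 (-X) 1 = fromBlocks (-(B*X)) B 0 D := by
    rw [Matrix.fromBlocks_multiply]
    simp
  have h2 := congrArg Matrix.det h
  rw [Matrix.det_mul, Matrix.det_fromBlocks_zero₁₂, Matrix.det_fromBlocks_zero₂₁] at h2
  simpa using h2

/-- index map -/
def idxMap {l : ℕ} (i : Fin l) : Unit ⊕ ({j : Fin l // j ≠ i} ⊕ {j : Fin l // j ≠ i}) →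
    {x : Fin l ⊕ Fin l ⊕ Unit // x ≠ Sum.inr (Sum.inl i) ∧ x ≠ Sum.inr (Sum.inr ())}
  | Sum.inl _ => ⟨Sum.inl i, by simp⟩
  | Sum.inr (Sum.inl j) => ⟨Sum.inl j.1, by simp⟩
  | Sum.inr (Sum.inr j) => ⟨Sum.inr (Sum.inl j.1), by simpa using j.2⟩

lemma idxMap_bij {l : ℕ} (i : Fin l) : Function.Bijective (idxMap i) := by
  constructor
  · rintro (_ | ⟨a, ha⟩ | ⟨a, ha⟩) (_ | ⟨b, hb⟩ | ⟨b, hb⟩) h <;>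
      simp_all [idxMap]
    exact hb h.symm
  · rintro ⟨(a | a | a), h1, h2⟩
    · by_cases ha : a = i
      · exact ⟨Sum.inl (), by simp [idxMap, ha]⟩
      · exact ⟨Sum.inr (Sum.inl ⟨a, ha⟩), rfl⟩
    · exact ⟨Sum.inr (Sum.inr ⟨a, by simpa using h1⟩), rfl⟩
    · simp at h2

/-- For `l ≥ 3`, `d ≥ 1` and each `i`, the principal minor of `A` obtained by deleting the rows
and columns indexed by `u_i` and `u₀` equals `(-1)^(l-2) · 2d · (l-1)(l-2) · (d+1)^(2(l-1))`. -/
theorem stmt16 (l d : ℕ) (hl : 3 ≤ l) (hd : 1 ≤ d) (i : Fin l) :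
    ((matA l d).submatrix
        (fun x : {x : Fin l ⊕ Fin l ⊕ Unit //
            x ≠ Sum.inr (Sum.inl i) ∧ x ≠ Sum.inr (Sum.inr ())} => x.1)
        (fun x : {x : Fin l ⊕ Fin l ⊕ Unit //
            x ≠ Sum.inr (Sum.inl i) ∧ x ≠ Sum.inr (Sum.inr ())} => x.1)).det
      = (-1 : ℝ)^(l-2) * (2*(d:ℝ)) * (((l:ℝ)-1) * ((l:ℝ)-2)) * ((d:ℝ)+1)^(2*(l-1)) := by
  classical
  rw [← Matrix.det_submatrix_equiv_self (Equiv.ofBijective _ (idxMap_bij i))]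
  have hcard : Fintype.card {j : Fin l // j ≠ i} = l - 1 := by
    simp [Fintype.card_subtype_compl]
  obtain ⟨n, rfl⟩ : ∃ n, l = n + 3 := ⟨l - 3, by omega⟩
  have hd0 : (d:ℝ) ≠ 0 := by positivity
  have hn : (n:ℝ) + 1 ≠ 0 := by positivity
  set K : Matrix {j : Fin (n+3) // j ≠ i} {j : Fin (n+3) // j ≠ i} ℝ :=
    Matrix.of fun a b => if a = b then (0:ℝ) else 1 with hK
  set D := fromBlocks ((2*(d:ℝ)) • K) (((d:ℝ)+1) • K) (((d:ℝ)+1) • K) 0 with hD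
  set X : Matrix ({j : Fin (n+3) // j ≠ i} ⊕ {j : Fin (n+3) // j ≠ i}) Unit ℝ :=
    Matrix.of fun a _ => Sum.elim (fun _ => 1/((n:ℝ)+1)) (fun _ => 0) a with hX
  set B : Matrix Unit ({j : Fin (n+3) // j ≠ i} ⊕ {j : Fin (n+3) // j ≠ i}) ℝ :=
    Matrix.of fun _ a => Sum.elim (fun _ => 2*(d:ℝ)) (fun _ => (d:ℝ)+1) a with hB
  have hrow : ∀ a, ∑ b, K a b = (n:ℝ) + 1 := by
    intro a
    have : ∀ b, K a b = 1 - if a = b then 1 else 0 := by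
      intro b
      by_cases h : a = b <;> simp [hK, h]
    simp only [this, Finset.sum_sub_distrib]
    rw [Finset.sum_const, Finset.card_univ, hcard]
    simp
    ring
  have hDX : ∀ a u, (D * X) a u = Sum.elim (fun _ => 2*(d:ℝ)) (fun _ => (d:ℝ)+1) a := by
    rintro (a | a) u
    · simp [Matrix.mul_apply, hD, hX, Fintype.sum_sum_type, -of_apply]
      simp [← Finset.sum_mul, ← Finset.mul_sum, hrow]
      field_simp
    · simp [Matrix.mul_apply, hD, hX, Fintype.sum_sum_type]
      simp [← Finset.sum_mul, ← Finset.mul_sum, hrow]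
      field_simp
  have hBX : (-(B * X)).det = -(2 * d * ((n:ℝ)+2) / ((n:ℝ)+1)) := by
    rw [Matrix.det_unique]
    simp only [Matrix.neg_apply, Matrix.mul_apply, hB, hX, Fintype.sum_sum_type, of_apply,
      Sum.elim_inl, Sum.elim_inr, Finset.sum_const, Finset.card_univ, hcard]
    simp
    field_simp
  have key : (((matA (n+3) d).submatrix
        (fun x : {x : Fin (n+3) ⊕ Fin (n+3) ⊕ Unit //
            x ≠ Sum.inr (Sum.inl i) ∧ x ≠ Sum.inr (Sum.inr ())} => x.1)
        (fun x : {x : Fin (n+3) ⊕ Fin (n+3) ⊕ Unit //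
            x ≠ Sum.inr (Sum.inl i) ∧ x ≠ Sum.inr (Sum.inr ())} => x.1)).submatrix
        (Equiv.ofBijective _ (idxMap_bij i)) (Equiv.ofBijective _ (idxMap_bij i)))
      = fromBlocks 0 B (D * X) D := by
    ext a b
    rcases a with _ | a | a <;> rcases b with _ | b | b
    · simp [matA, idxMap]
    · simp [matA, idxMap, hB, b.2.symm]
    · simp [matA, idxMap, hB, b.2.symm]
    · rw [fromBlocks_apply₂₁, hDX]
      simp [matA, idxMap, a.2]
    · simp [matA, idxMap, hD, hK, Subtype.ext_iff]
    · simp [matA, idxMap, hD, hK, Subtype.ext_iff]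
    · rw [fromBlocks_apply₂₁, hDX]
      simp [matA, idxMap, a.2]
    · simp [matA, idxMap, hD, hK, Subtype.ext_iff]
    · simp [matA, idxMap, hD]
  rw [key, detN_aux, hBX, hD, detD_aux _ _ _ (by positivity), hK, detK_aux, hcard]
  have e1 : n + 3 - 1 = n + 2 := rfl
  have e2 : n + 3 - 2 = n + 1 := rfl
  rw [e1, e2, neg_pow (((d:ℝ)+1)^2), ← pow_mul, mul_pow, ← pow_mul, mul_comm (n+2) 2, pow_mul (-1:ℝ) 2]
  push_cast
  field_simp
  ring
end

section
/- For integers l ≥ 3 and d ≥ 1, let A be the (2l+1) × (2l+1) matrix with rows and columns indexed by v₁,…,v_l, u₁,…,u_l, u₀, whose entries are A_{v_i v_j} = 2d for i ≠ j, A_{v_i u_j} = A_{u_j v_i} = d+1 for i ≠ j, A_{v_i u_i} = A_{u_i v_i} = 0, A_{v_i u₀} = A_{u₀ v_i} = d, and all remaining entries zero. For each pair i ≠ j with i, j ∈ {1, …, l}, the determinant of the (2l−1) × (2l−1) principal submatrix of A obtained by deleting the rows and columns indexed by u_i and u_j equals (−1)^{l−2} · 4d³ · (d+1)^{2(l−2)}.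 -/
open SimpleGraph Finset Matrix Polynomial

/-- The nontrivial reindexing of the remaining rows. -/
def idxEquiv (l : ℕ) (i j : Fin l) (hij : i ≠ j) :
    (({k : Fin l // k ≠ i ∧ k ≠ j} ⊕ {k : Fin l // k ≠ i ∧ k ≠ j}) ⊕ Fin 3) ≃
    {x : Fin l ⊕ Fin l ⊕ Unit // x ≠ Sum.inr (Sum.inl i) ∧ x ≠ Sum.inr (Sum.inl j)} where
  toFun x := match x with
    | Sum.inl (Sum.inl k) => ⟨Sum.inl k.1, by simp⟩
    | Sum.inl (Sum.inr k) => ⟨Sum.inr (Sum.inl k.1), by simpa using k.2⟩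
    | Sum.inr 0 => ⟨Sum.inl i, by simp⟩
    | Sum.inr 1 => ⟨Sum.inl j, by simp⟩
    | Sum.inr 2 => ⟨Sum.inr (Sum.inr ()), by simp⟩
  invFun x := match x with
    | ⟨Sum.inl k, _⟩ => if h : k = i then Sum.inr 0 else if h' : k = j then Sum.inr 1 else
        Sum.inl (Sum.inl ⟨k, h, h'⟩)
    | ⟨Sum.inr (Sum.inl k), h⟩ => Sum.inl (Sum.inr ⟨k, by simpa using h⟩)
    | ⟨Sum.inr (Sum.inr _), _⟩ => Sum.inr 2
  left_inv x := by
    rcases x with (⟨k, h⟩ | ⟨k, h⟩) | x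
    · simp [h.1, h.2]
    · simp
    · fin_cases x <;> simp [hij.symm]
  right_inv x := by
    rcases x with ⟨k | k | k, h⟩
    · by_cases h1 : k = i
      · subst h1; simp
      · by_cases h2 : k = j
        · subst h2; simp [h1]
        · simp [h1, h2]
    · simp
    · simp

section aux
variable {S : Type*} [Fintype S] [DecidableEq S]

/-- the reindexed matrix -/
def mM (S : Type*) [DecidableEq S] (d : ℝ) : Matrix ((S ⊕ S) ⊕ Fin 3) ((S ⊕ S) ⊕ Fin 3) ℝ :=
  fromBlocks
    (fromBlocks (of fun a b => if a = b then 0 else 2*d) (of fun a b => if a = b then 0 else d+1)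
      (of fun a b => if a = b then 0 else d+1) 0)
    (of fun a b => Sum.elim (fun _ => ![2*d, 2*d, d] b) (fun _ => ![d+1, d+1, 0] b) a)
    (of fun b a => Sum.elim (fun _ => ![2*d, 2*d, d] b) (fun _ => ![d+1, d+1, 0] b) a)
    !![0, 2*d, d; 2*d, 0, d; d, d, 0]

/-- first reduction -/
def mM1 (S : Type*) [DecidableEq S] (d : ℝ) : Matrix ((S ⊕ S) ⊕ Fin 3) ((S ⊕ S) ⊕ Fin 3) ℝ :=
  fromBlocks
    (fromBlocks (of fun a b => if a = b then -(2*d) else 0) (of fun a b => if a = b then -(d+1) else 0)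
      (of fun a b => if a = b then -(d+1) else 0) 0)
    (of fun a b => Sum.elim (fun _ => ![0, 0, d] b) (fun _ => 0) a)
    (of fun b a => Sum.elim (fun _ => ![0, 0, d] b) (fun _ => 0) a)
    !![-(2*d), 0, d; 0, -(2*d), d; d, d, 0]

/-- second reduction -/
def mB (S : Type*) [DecidableEq S] (d : ℝ) : Matrix ((S ⊕ S) ⊕ Fin 3) ((S ⊕ S) ⊕ Fin 3) ℝ :=
  fromBlocks
    (fromBlocks (of fun a b => if a = b then -(2*d) else 0) (of fun a b => if a = b then -(d+1) else 0)
      (of fun a b => if a = b then -(d+1) else 0) 0)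
    0 0
    !![-(2*d), 0, d; 0, -(2*d), d; d, d, 0]

/-- first change of basis -/
noncomputable def mQ1 (S : Type*) [DecidableEq S] (d : ℝ) : Matrix ((S ⊕ S) ⊕ Fin 3) ((S ⊕ S) ⊕ Fin 3) ℝ :=
  fromBlocks 1 0
    (of fun b a => Sum.elim (fun _ => ![0, 0, 1] b) (fun _ => ![0, 0, (d+1)/d] b) a)
    !![1, 0, 0; 0, 1, 0; 1, 1, 1]

/-- second change of basis -/
noncomputable def mQ2 (S : Type*) [DecidableEq S] (d : ℝ) : Matrix ((S ⊕ S) ⊕ Fin 3) ((S ⊕ S) ⊕ Fin 3) ℝ :=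
  fromBlocks 1
    (of fun a b => Sum.elim (fun _ => 0) (fun _ => ![0, 0, -(d/(d+1))] b) a)
    0 1

theorem mM_eq (d : ℝ) (hd : 0 < d) : mM S d = (mQ1 S d)ᵀ * mM1 S d * mQ1 S d := by
  have h0 : d ≠ 0 := hd.ne'
  ext x y
  rcases x with (x | x) | x <;> rcases y with (y | y) | y <;> try fin_cases x
  all_goals try fin_cases y
  all_goals
    simp [mM, mQ1, mM1, Matrix.mul_apply, Fintype.sum_sum_type, Fin.sum_univ_three, Matrix.one_apply]
  all_goals try split_ifs
  all_goals try field_simp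
  all_goals try ring

theorem mM1_eq (d : ℝ) (hd : 0 < d) : mM1 S d = (mQ2 S d)ᵀ * mB S d * mQ2 S d := by
  have h0 : d + 1 ≠ 0 := by positivity
  ext x y
  rcases x with (x | x) | x <;> rcases y with (y | y) | y <;> try fin_cases x
  all_goals try fin_cases y
  all_goals
    simp [mB, mQ2, mM1, Matrix.mul_apply, Fintype.sum_sum_type, Fin.sum_univ_three, Matrix.one_apply]
  all_goals try split_ifs
  all_goals try field_simp
  all_goals try ring

theorem det_mB (d : ℝ) (hd : 0 < d) :
    (mB S d).det = (-1) ^ Fintype.card S * (4 * d^3) * (d+1)^(2 * Fintype.card S) := by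
  have hs : ∀ c : ℝ, (of fun a b : S => if a = b then c else 0) = c • (1 : Matrix S S ℝ) := by
    intro c; ext a b; simp [Matrix.one_apply]
  rw [mB, det_fromBlocks_zero₂₁, hs, hs]
  have h1 : (fromBlocks ((-(2*d)) • (1 : Matrix S S ℝ)) ((-(d+1)) • (1 : Matrix S S ℝ)) ((-(d+1)) • (1 : Matrix S S ℝ)) (0 : Matrix S S ℝ)).det
      = (-(d+1)^2) ^ Fintype.card S := by
    have h2 : -(2*d) ≠ 0 := by simp [hd.ne']
    letI : Invertible ((-(2*d)) • (1 : Matrix S S ℝ)) :=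
      ⟨(-(2*d))⁻¹ • 1, by rw [Matrix.smul_mul, Matrix.one_mul, smul_smul, inv_mul_cancel₀ h2, one_smul],
        by rw [Matrix.smul_mul, Matrix.one_mul, smul_smul, mul_inv_cancel₀ h2, one_smul]⟩
    rw [det_fromBlocks₁₁]
    have h3 : ⅟((-(2*d)) • (1 : Matrix S S ℝ)) = (-(2*d))⁻¹ • 1 := rfl
    rw [h3]
    have h4 : (0 : Matrix S S ℝ) - (-(d+1)) • (1 : Matrix S S ℝ) * ((-(2*d))⁻¹ • 1) * ((-(d+1)) • 1)
        = (-((d+1)^2 * (-(2*d))⁻¹)) • 1 := by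
      simp only [Matrix.smul_mul, Matrix.mul_smul, Matrix.one_mul, smul_smul, zero_sub, ← neg_smul]
      congr 1; ring
    rw [h4, det_smul, det_smul, det_one, mul_one, mul_one, ← mul_pow]
    congr 1
    field_simp
  rw [h1, det_fin_three, neg_pow, pow_mul]
  simp
  ring

theorem det_mM (d : ℝ) (hd : 0 < d) :
    (mM S d).det = (-1) ^ Fintype.card S * (4 * d^3) * (d+1)^(2 * Fintype.card S) := by
  have h1 : (mQ1 S d).det = 1 := by
    rw [mQ1, det_fromBlocks_zero₁₂, det_fin_three]; simp
  have h2 : (mQ2 S d).det = 1 := by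
    rw [mQ2, det_fromBlocks_zero₂₁]; simp
  rw [mM_eq d hd, mM1_eq d hd]
  simp only [det_mul, det_transpose, h1, h2, det_mB d hd]
  ring

end aux

/-- For `l ≥ 3`, `d ≥ 1` and `i ≠ j`, the principal minor of `A` obtained by deleting the rows
and columns indexed by `u_i` and `u_j` equals `(-1)^(l-2) · 4d³ · (d+1)^(2(l-2))`. -/
theorem stmt17 (l d : ℕ) (hl : 3 ≤ l) (hd : 1 ≤ d) (i j : Fin l) (hij : i ≠ j) :
    ((matA l d).submatrix
        (fun x : {x : Fin l ⊕ Fin l ⊕ Unit //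
            x ≠ Sum.inr (Sum.inl i) ∧ x ≠ Sum.inr (Sum.inl j)} => x.1)
        (fun x : {x : Fin l ⊕ Fin l ⊕ Unit //
            x ≠ Sum.inr (Sum.inl i) ∧ x ≠ Sum.inr (Sum.inl j)} => x.1)).det
      = (-1 : ℝ)^(l-2) * (4*(d:ℝ)^3) * ((d:ℝ)+1)^(2*(l-2)) := by
  have hd' : (0:ℝ) < d := by exact_mod_cast hd
  have hc : Fintype.card {k : Fin l // k ≠ i ∧ k ≠ j} = l - 2 := by
    rw [Fintype.card_subtype]
    have : (Finset.univ.filter fun k : Fin l => k ≠ i ∧ k ≠ j) = ({i, j} : Finset (Fin l))ᶜ := by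
      ext k; simp
    rw [this, Finset.card_compl, Finset.card_pair hij, Fintype.card_fin]
  rw [← hc, ← det_mM (d:ℝ) hd', ← det_submatrix_equiv_self (idxEquiv l i j hij)]
  congr 1
  ext x y
  rcases x with (⟨x, hx⟩ | ⟨x, hx⟩) | x <;> rcases y with (⟨y, hy⟩ | ⟨y, hy⟩) | y <;> try fin_cases x
  all_goals try fin_cases y
  all_goals
    simp_all [mM, matA, idxEquiv, hij, hij.symm, Ne.symm]
end

section
/- Let G be a diametrical graph on 2k vertices with diameter d, i.e., a connected graph in which every vertex v has a unique vertex v̄ with d_G(v, v̄) = diam(G) = d. Then the spectrum of the eccentricity matrix 𝓔(G) consists of the eigenvalue d with multiplicity k and the eigenvalue −d with multiplicity k; in particular, the 𝓔-eigenvalues of G are symmetric about the origin. -/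
open SimpleGraph Finset Matrix Polynomial

theorem multiset_aux (S : Multiset ℝ) (k : ℕ) (d : ℝ) (hd : d ≠ 0) (hc : S.card = 2 * k)
    (hs : S.sum = 0) (h : ∀ x ∈ S, x = d ∨ x = -d) :
    S = Multiset.replicate k d + Multiset.replicate k (-d) := by
  have e := Multiset.filter_add_not (fun x => x = d) S
  have e1 : S.filter (fun x => x = d) =
      Multiset.replicate (S.filter (fun x => x = d)).card d := by
    rw [Multiset.eq_replicate]
    exact ⟨rfl, fun b hb => (Multiset.mem_filter.1 hb).2⟩
  have e2 : S.filter (fun x => ¬ x = d) =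
      Multiset.replicate (S.filter (fun x => ¬ x = d)).card (-d) := by
    rw [Multiset.eq_replicate]
    refine ⟨rfl, fun b hb => ?_⟩
    obtain ⟨h1, h2⟩ := Multiset.mem_filter.1 hb
    exact (h b h1).resolve_left h2
  generalize (S.filter (fun x => x = d)).card = a at e1
  generalize (S.filter (fun x => ¬ x = d)).card = b at e2
  rw [e1, e2] at e
  rw [← e] at hc hs ⊢
  simp only [Multiset.card_add, Multiset.card_replicate] at hc
  simp only [Multiset.sum_add, Multiset.sum_replicate, nsmul_eq_mul] at hs
  have h3 : ((a : ℝ) - b) * d = 0 := by linarith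
  have h4 : (a : ℝ) = b := by
    rcases mul_eq_zero.1 h3 with h | h
    · linarith
    · exact absurd h hd
  have h5 : a = b := by exact_mod_cast h4
  have h6 : a = k := by omega
  have h7 : b = k := by omega
  rw [h6, h7]

/-- For a diametrical graph `G` on `2k` vertices with diameter `d` (every vertex `v` has a
unique vertex at distance `d` from it), the spectrum of the eccentricity matrix consists of `d`
with multiplicity `k` and `-d` with multiplicity `k`; in particular it is symmetric about the
origin. -/
theorem stmt18 {V : Type*} [Fintype V] [DecidableEq V] (G : SimpleGraph V) (k dd : ℕ)
    (hcard : Fintype.card V = 2*k) (hconn : G.Connected) (hdiam : gdiam G = dd)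
    (hdia : ∀ v : V, ∃! w : V, G.dist v w = dd) :
    (eccMatrix G).charpoly.roots
        = Multiset.replicate k (dd : ℝ) + Multiset.replicate k (-(dd : ℝ)) ∧
    ∀ x : ℝ, (eccMatrix G).charpoly.roots.count x
        = (eccMatrix G).charpoly.roots.count (-x) := by
  have hle : ∀ u v, G.dist u v ≤ dd := by
    intro u v
    rw [← hdiam]
    exact Finset.le_sup (f := fun p : V × V => G.dist p.1 p.2) (Finset.mem_univ (u, v))
  have hecc : ∀ u, ecc G u = dd := by
    intro u
    apply le_antisymm
    · exact Finset.sup_le fun v _ => hle u v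
    · obtain ⟨w, hw, -⟩ := hdia u
      rw [← hw]
      exact Finset.le_sup (f := fun v => G.dist u v) (Finset.mem_univ w)
  choose σ hσ hu using hdia
  beta_reduce at hσ hu
  have hinv : ∀ v, σ (σ v) = v := fun v =>
    (hu (σ v) v (by rw [SimpleGraph.dist_comm]; exact hσ v)).symm
  have hE : ∀ u v, eccMatrix G u v = if v = σ u then (dd : ℝ) else 0 := by
    intro u v
    simp only [eccMatrix, Matrix.of_apply, hecc, min_self]
    by_cases h : v = σ u
    · subst h
      simp [hσ u]
    · have : G.dist u v ≠ dd := fun h' => h (hu u v h')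
      simp [h, this]
  have hd : dd ≠ 0 := by
    intro h0
    obtain ⟨x⟩ := hconn.nonempty
    have hs : ∀ y, y = x := by
      intro y
      have := hle x y
      have h1 := hu x y (by omega)
      have h2 := hu x x (by rw [SimpleGraph.dist_self]; omega)
      rw [h1, ← h2]
    have := Fintype.card_eq_one_iff.2 ⟨x, hs⟩
    omega
  have hdR : (dd : ℝ) ≠ 0 := by exact_mod_cast hd
  have hherm : (eccMatrix G).IsHermitian := by
    ext u v
    simp only [Matrix.conjTranspose_apply, star_trivial, hE]
    have : u = σ v ↔ v = σ u := ⟨fun h => by rw [h, hinv], fun h => by rw [h, hinv]⟩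
    simp [this]
  have hsq : ∀ i, hherm.eigenvalues i = (dd : ℝ) ∨ hherm.eigenvalues i = -(dd : ℝ) := by
    intro i
    have hmv : ∀ (w : V → ℝ) u, (eccMatrix G *ᵥ w) u = dd * w (σ u) := by
      intro w u
      simp [Matrix.mulVec, dotProduct, hE]
    have h1 := hherm.mulVec_eigenvectorBasis i
    have hne : hherm.eigenvectorBasis i ≠ 0 := hherm.eigenvectorBasis.orthonormal.ne_zero i
    obtain ⟨u, hu0⟩ : ∃ u, hherm.eigenvectorBasis i u ≠ 0 := by
      by_contra hcon
      push Not at hcon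
      exact hne (by ext u; simpa using hcon u)
    have a1 := congrFun h1 u
    have a2 := congrFun h1 (σ u)
    rw [hmv] at a1 a2
    rw [hinv] at a2
    simp only [Pi.smul_apply, smul_eq_mul] at a1 a2
    apply sq_eq_sq_iff_eq_or_eq_neg.1
    apply mul_right_cancel₀ hu0
    linear_combination (-hherm.eigenvalues i) * a1 - (dd : ℝ) * a2
  have htr : (eccMatrix G).trace = 0 := by
    simp only [Matrix.trace, Matrix.diag_apply, hE]
    apply Finset.sum_eq_zero
    intro u _
    rw [if_neg]
    intro h
    have := hσ u
    rw [← h, SimpleGraph.dist_self] at this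
    exact hd this.symm
  have hmain : (eccMatrix G).charpoly.roots
        = Multiset.replicate k (dd : ℝ) + Multiset.replicate k (-(dd : ℝ)) := by
    rw [hherm.roots_charpoly_eq_eigenvalues]
    apply multiset_aux _ _ _ hdR
    · simpa using hcard
    · have := hherm.trace_eq_sum_eigenvalues
      rw [htr] at this
      simpa using this.symm
    · intro x hx
      obtain ⟨i, -, rfl⟩ := Multiset.mem_map.1 hx
      simpa using hsq i
  refine ⟨hmain, fun x => ?_⟩
  rw [hmain]
  simp only [Multiset.count_add, Multiset.count_replicate, neg_inj]
  have : (dd : ℝ) = -x ↔ -(dd : ℝ) = x := ⟨fun h => by linarith, fun h => by linarith⟩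
  simp only [this]
  exact add_comm _ _
end
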